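/- Energy distribution estimate (Corollary 4.5): Assume 3 ≤ d ≤ 6, 1 + 4/(d−1) ≤ p < 1 + 4/(d−2), and a > −(d−2)²/4 + ((d−2)p − d)²/(4p²); set λ_d = (d−1)(d−3)/4. Let u be a finite-energy radial classical solution of (NLW_a). Then for all 0 < R < T: ∫_R^T ∫_{|x|<R} ( ½|∇u|² + (a/2)|u|²/|x|² + ½|∂ₜu|² + (1/(p+1))|u|^{p+1} ) dx dt ≤ ∫_{−R}^R ∫_{|x|>R} ( ½|∇u|² + (a/2)|u|²/|x|² + ½|∂ₜu|² + (1/(p+1))|u|^{p+1} ) dx dt + R(|a| − λ_d) [ ∫_{−R}^T ∫_{|x|>R} |u|²/|x|³ dx dt + ½ ∫_{|x|>R} ( |u(x,−R)|² + |u(x,T)|² )/|x|² dx ]. -/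

import Mathlib

/-!
The estimate is a Morawetz estimate for radial waves. With `m = (d-1)/2`, the function
`w = r^m u` solves `w_tt - w_rr + μ w / r² + r^{-γ} |w|^{p-1} w = 0` on `(0, ∞) × ℝ`, where
`μ = a + λ_d` and `γ = m (p - 1)` (`Sol.reduced`). The lower bound on `a` gives `μ > -1/4`, which is
the coercivity range of Hardy's inequality on the half line, and `p ≥ 1 + 4/(d-1)` gives `γ ≥ 2`.

On the half line, multiply the equation by `min(r, R) w_r` and integrate over `[-R, T]`. The bulk
terms are at least the energy in `r < R` (because `γ ≥ 2`) plus `R μ ∫ w² / r³` over `r > R`; the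
time boundary terms at `-R` and `T` are each bounded by `R E - (R μ / 2) ∫ w² / r²`, the integral
being over `r > R`. The last bound (`Wave.abs_J_le`) combines Young's inequality with a weighted
Hardy inequality (`FiniteWave.hardy_weighted`). Since `2 R E = ∫_{-R}^R E`, subtracting the
energy in `r < R` over `[-R, R]` leaves `Wave.energy_distribution`.

No regularity at `r = 0` and no decay at infinity is assumed, so the boundary terms there are
handled by an integrability argument: the flux has a limit and is dominated by `r` times an
integrable function, while `1 / r` is not integrable at either end (`limit_zero_at_zero`, `limit_zero_at_top`).

In returning to `u`, the energy densities of `u` and `w` differ by a multiple of the derivative of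
`w² / r`. The resulting terms `w(R, t)² / R` decrease the energy inside and increase the energy
outside, so the estimate for `w` implies the one for `u`; finally `-μ ≤ |a| - λ_d`.
-/

noncomputable section

open MeasureTheory Metric Filter Real Set

/-- The Laplacian of `f : ℝ^d → ℝ`, written as the sum of second partial derivatives
in the coordinate directions. -/
def lap {d : ℕ} (f : EuclideanSpace ℝ (Fin d) → ℝ) (x : EuclideanSpace ℝ (Fin d)) : ℝ :=
  ∑ i : Fin d, fderiv ℝ (fun y => fderiv ℝ f y (EuclideanSpace.single i 1)) x
    (EuclideanSpace.single i 1)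

/-- A finite-energy radial classical solution of the defocusing nonlinear wave equation
with inverse-square potential `∂ₜ²u − Δu + a|x|⁻²u = −|u|^{p−1}u` on `ℝ^d`. -/
structure Sol (d : ℕ) (a p : ℝ) where
  /-- the solution, as a function of `(x, t)` -/
  u : EuclideanSpace ℝ (Fin d) → ℝ → ℝ
  /-- the radial profile: `u(x,t)` depends on `x` only through `r = |x|` -/
  rad : ℝ → ℝ → ℝ
  u_eq_rad : ∀ (x : EuclideanSpace ℝ (Fin d)) (t : ℝ), u x t = rad ‖x‖ t
  smooth : ContDiffOn ℝ 2 (fun q : EuclideanSpace ℝ (Fin d) × ℝ => u q.1 q.2)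
    {q : EuclideanSpace ℝ (Fin d) × ℝ | q.1 ≠ 0}
  pde : ∀ (x : EuclideanSpace ℝ (Fin d)) (t : ℝ), x ≠ 0 →
    deriv (deriv (u x)) t - lap (fun y => u y t) x + a * u x t / ‖x‖ ^ 2
      = -(|u x t| ^ (p - 1) * u x t)
  finite : ∀ t : ℝ, Integrable (fun x : EuclideanSpace ℝ (Fin d) =>
    ‖gradient (fun y => u y t) x‖ ^ 2 + (u x t) ^ 2 / ‖x‖ ^ 2
      + (deriv (u x) t) ^ 2 + |u x t| ^ (p + 1))
  /-- the (conserved) energy -/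
  energy : ℝ
  energy_def : ∀ t : ℝ, energy = ∫ x : EuclideanSpace ℝ (Fin d),
    ((1:ℝ)/2 * ‖gradient (fun y => u y t) x‖ ^ 2 + a / 2 * (u x t) ^ 2 / ‖x‖ ^ 2
      + 1/2 * (deriv (u x) t) ^ 2 + 1/(p+1) * |u x t| ^ (p + 1))

/-- The surface integral `∫_{|x|=R} g dS` over the sphere of radius `R` in `ℝ^d`,
expressed via the surface measure `volume.toSphere` on the unit sphere. -/
def sphereIntegral (d : ℕ) (R : ℝ) (g : EuclideanSpace ℝ (Fin d) → ℝ) : ℝ :=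
  R ^ (d - 1) * ∫ ω : Metric.sphere (0 : EuclideanSpace ℝ (Fin d)) 1,
    g (R • (ω : EuclideanSpace ℝ (Fin d)))
      ∂((volume : Measure (EuclideanSpace ℝ (Fin d))).toSphere)

open scoped Topology
/-! ### Vanishing of boundary terms along the radial direction -/

/-- Since `1/r` is not integrable at `0`, a limit of `Z` at `0` must vanish as soon as
`|Z r| ≤ r |q r|` with `q` integrable. -/
lemma limit_zero_at_zero {Z q : ℝ → ℝ} {z R : ℝ} (hR : 0 < R)
    (hq : IntegrableOn q (Ioc 0 R)) (hb : ∀ r ∈ Ioo 0 R, |Z r| ≤ r * |q r|)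
    (hZ : Tendsto Z (𝓝[>] 0) (𝓝 z)) : z = 0 := by
  by_contra hz
  have hz' : 0 < |z| := abs_pos.mpr hz
  have h1 : ∀ᶠ r in 𝓝[>] (0:ℝ), |z| / 2 < |Z r| :=
    hZ.abs.eventually (lt_mem_nhds (by linarith))
  obtain ⟨δ, hδ, hδ'⟩ := (mem_nhdsGT_iff_exists_Ioo_subset).1 h1
  have hδ0 : (0:ℝ) < δ := hδ
  set b := min δ R / 2 with hbdef
  have hb0 : 0 < b := by have := lt_min hδ0 hR; positivity
  have hbδ : b < δ := by have := min_le_left δ R; have := lt_min hδ0 hR; linarith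
  have hbR : b < R := by have := min_le_right δ R; have := lt_min hδ0 hR; linarith
  have h2 : IntegrableOn (fun r : ℝ => r⁻¹) (Ioc 0 b) := by
    have hq' : IntegrableOn (fun r => (2 / |z|) * q r) (Ioc 0 b) :=
      (hq.mono_set (Ioc_subset_Ioc_right hbR.le)).const_mul _
    refine Integrable.mono hq' (measurable_inv.aestronglyMeasurable) ?_
    refine (ae_restrict_iff' measurableSet_Ioc).2 (ae_of_all _ fun r hr => ?_)
    have ha := hδ' ⟨hr.1, hr.2.trans_lt hbδ⟩
    have hb' := hb r ⟨hr.1, hr.2.trans_lt hbR⟩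
    have hr0 : 0 < r := hr.1
    simp only [mem_ofPred_eq] at ha
    rw [Real.norm_eq_abs, Real.norm_eq_abs, abs_mul, abs_of_pos (by positivity : 0 < r⁻¹),
      abs_of_pos (by positivity : 0 < 2 / |z|), inv_eq_one_div, div_le_iff₀ hr0,
      div_mul_eq_mul_div, div_mul_eq_mul_div, le_div_iff₀ hz']
    nlinarith
  have h3 : IntervalIntegrable (fun r : ℝ => r⁻¹) volume 0 b :=
    (intervalIntegrable_iff_integrableOn_Ioc_of_le hb0.le).2 h2
  rw [intervalIntegrable_inv_iff] at h3
  rcases h3 with h3 | h3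
  · exact hb0.ne h3
  · exact h3 left_mem_uIcc

/-- The counterpart at infinity, where `1/r` is again not integrable. -/
lemma limit_zero_at_top {Z q : ℝ → ℝ} {z R : ℝ} (hR : 0 < R)
    (hq : IntegrableOn q (Ioi R)) (hb : ∀ r ∈ Ioi R, |Z r| ≤ r * |q r|)
    (hZ : Tendsto Z atTop (𝓝 z)) : z = 0 := by
  by_contra hz
  have hz' : 0 < |z| := abs_pos.mpr hz
  have h1 : ∀ᶠ r in atTop, |z| / 2 < |Z r| :=
    hZ.abs.eventually (lt_mem_nhds (by linarith))
  obtain ⟨δ, hδ'⟩ := eventually_atTop.1 h1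
  set b := max δ R with hbdef
  have h2 : IntegrableOn (fun r : ℝ => r⁻¹) (Ioi b) := by
    have hq' : IntegrableOn (fun r => (2 / |z|) * q r) (Ioi b) :=
      (hq.mono_set (Ioi_subset_Ioi (le_max_right _ _))).const_mul _
    refine Integrable.mono hq' (measurable_inv.aestronglyMeasurable) ?_
    refine (ae_restrict_iff' measurableSet_Ioi).2 (ae_of_all _ fun r hr => ?_)
    have hr1 : δ < r := lt_of_le_of_lt (le_max_left _ _) hr
    have hr2 : R < r := lt_of_le_of_lt (le_max_right _ _) hr
    have ha := hδ' r hr1.le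
    have hb' := hb r hr2
    have hr0 : 0 < r := hR.trans hr2
    rw [Real.norm_eq_abs, Real.norm_eq_abs, abs_mul, abs_of_pos (by positivity : 0 < r⁻¹),
      abs_of_pos (by positivity : 0 < 2 / |z|), inv_eq_one_div, div_le_iff₀ hr0,
      div_mul_eq_mul_div, div_mul_eq_mul_div, le_div_iff₀ hz']
    nlinarith
  exact not_integrableOn_Ioi_inv h2

lemma tendsto_integral_left {f : ℝ → ℝ} {R : ℝ} (hR : 0 < R) (hf : IntegrableOn f (Ioc 0 R)) :
    Tendsto (fun a => ∫ x in a..R, f x) (𝓝[>] 0) (𝓝 (∫ x in Ioc 0 R, f x)) := by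
  have h : IntegrableOn f (uIcc 0 R) := by
    rw [uIcc_of_le hR.le, integrableOn_Icc_iff_integrableOn_Ioc]; exact hf
  have h1 := intervalIntegral.continuousOn_primitive_interval_left h 0 left_mem_uIcc
  rw [← intervalIntegral.integral_of_le hR.le]
  refine h1.tendsto.mono_left ?_
  rw [uIcc_of_le hR.le]
  exact nhdsWithin_le_of_mem (mem_of_superset (Ioo_mem_nhdsGT hR) Ioo_subset_Icc_self)

lemma integral_deriv_Ioc {G G' q : ℝ → ℝ} {R : ℝ} (hR : 0 < R)
    (hG : ∀ r, 0 < r → HasDerivAt G (G' r) r) (hc : ContinuousOn G' (Ioi 0))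
    (hi : IntegrableOn G' (Ioc 0 R)) (hq : IntegrableOn q (Ioc 0 R))
    (hb : ∀ r ∈ Ioo 0 R, |G r| ≤ r * |q r|) : ∫ r in Ioc 0 R, G' r = G R := by
  have h1 : Tendsto G (𝓝[>] 0) (𝓝 (G R - ∫ r in Ioc 0 R, G' r)) := by
    refine ((tendsto_const_nhds (x := G R)).sub (tendsto_integral_left hR hi)).congr' ?_
    filter_upwards [Ioo_mem_nhdsGT hR] with a ha
    have hs : uIcc a R ⊆ Ioi 0 := by
      rw [uIcc_of_le ha.2.le]; exact fun x hx => lt_of_lt_of_le ha.1 hx.1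
    rw [intervalIntegral.integral_eq_sub_of_hasDerivAt (fun x hx => hG x (hs hx))
      ((hc.mono hs).intervalIntegrable)]
    ring
  have := limit_zero_at_zero hR hq hb h1
  linarith

lemma integral_deriv_Ioi {G G' q : ℝ → ℝ} {R : ℝ} (hR : 0 < R)
    (hG : ∀ r, 0 < r → HasDerivAt G (G' r) r) (hc : ContinuousOn G' (Ioi 0))
    (hi : IntegrableOn G' (Ioi R)) (hq : IntegrableOn q (Ioi R))
    (hb : ∀ r ∈ Ioi R, |G r| ≤ r * |q r|) : ∫ r in Ioi R, G' r = - G R := by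
  have h1 : Tendsto G atTop (𝓝 (G R + ∫ r in Ioi R, G' r)) := by
    refine ((tendsto_const_nhds (x := G R)).add
      (intervalIntegral_tendsto_integral_Ioi R hi tendsto_id)).congr' ?_
    filter_upwards [Ioi_mem_atTop R] with a ha
    have hs : uIcc R a ⊆ Ioi 0 := by
      rw [uIcc_of_le (le_of_lt ha)]; exact fun x hx => lt_of_lt_of_le hR hx.1
    rw [id, intervalIntegral.integral_eq_sub_of_hasDerivAt (fun x hx => hG x (hs hx))
      ((hc.mono hs).intervalIntegrable)]
    exact add_sub_cancel _ _
  have := limit_zero_at_top hR hq hb h1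
  linarith

/-! ### The divergence identity on space-time rectangles -/

lemma slice_t {f : ℝ → ℝ → ℝ}
    (hf : ContinuousOn (fun q : ℝ × ℝ => f q.1 q.2) (Ioi 0 ×ˢ univ)) {r : ℝ} (hr : 0 < r) :
    Continuous (fun t => f r t) :=
  hf.comp_continuous (f := fun t : ℝ => (r, t)) (by fun_prop) (fun t => ⟨hr, mem_univ _⟩)

lemma slice_r {f : ℝ → ℝ → ℝ}
    (hf : ContinuousOn (fun q : ℝ × ℝ => f q.1 q.2) (Ioi 0 ×ˢ univ)) (t : ℝ) :
    ContinuousOn (fun r => f r t) (Ioi 0) :=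
  hf.comp (f := fun r : ℝ => (r, t)) (by fun_prop) (fun r hr => ⟨hr, mem_univ _⟩)

lemma integrable_rect {f : ℝ → ℝ → ℝ}
    (hf : ContinuousOn (fun q : ℝ × ℝ => f q.1 q.2) (Ioi 0 ×ˢ univ)) {a b t₁ t₂ : ℝ}
    (ha : 0 < a) :
    Integrable (Function.uncurry f)
      ((volume.restrict (Ioc a b)).prod (volume.restrict (Ioc t₁ t₂))) := by
  rw [Measure.prod_restrict]
  have h : IntegrableOn (fun q : ℝ × ℝ => f q.1 q.2) (Icc a b ×ˢ Icc t₁ t₂) volume :=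
    (hf.mono (fun q hq => ⟨lt_of_lt_of_le ha hq.1.1, mem_univ _⟩)).integrableOn_compact
      (isCompact_Icc.prod isCompact_Icc)
  exact h.mono_set (prod_mono Ioc_subset_Icc_self Ioc_subset_Icc_self)

lemma rect_identity {P P' Q Q' D : ℝ → ℝ → ℝ} {a b t₁ t₂ : ℝ} (ha : 0 < a) (hab : a ≤ b)
    (ht : t₁ ≤ t₂)
    (hP : ∀ r t, 0 < r → HasDerivAt (fun s => P r s) (P' r t) t)
    (hQ : ∀ r t, 0 < r → HasDerivAt (fun s => Q s t) (Q' r t) r)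
    (hPQ : ∀ r t, 0 < r → P' r t = Q' r t - D r t)
    (cP' : ContinuousOn (fun q : ℝ × ℝ => P' q.1 q.2) (Ioi 0 ×ˢ univ))
    (cQ : ContinuousOn (fun q : ℝ × ℝ => Q q.1 q.2) (Ioi 0 ×ˢ univ))
    (cQ' : ContinuousOn (fun q : ℝ × ℝ => Q' q.1 q.2) (Ioi 0 ×ˢ univ)) :
    ∫ r in a..b, (P r t₂ - P r t₁) =
      (∫ t in t₁..t₂, Q b t) - (∫ t in t₁..t₂, Q a t) - ∫ r in a..b, ∫ t in t₁..t₂, D r t := by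
  have hb : 0 < b := ha.trans_le hab
  have cD : ContinuousOn (fun q : ℝ × ℝ => D q.1 q.2) (Ioi 0 ×ˢ univ) := by
    refine (cQ'.sub cP').congr fun q hq => ?_
    have := hPQ q.1 q.2 hq.1
    simp only [Pi.sub_apply]; linarith
  have e1 : ∫ r in a..b, (P r t₂ - P r t₁) =
      ∫ r in a..b, ((∫ t in t₁..t₂, Q' r t) - ∫ t in t₁..t₂, D r t) := by
    refine intervalIntegral.integral_congr fun r hr => ?_
    rw [uIcc_of_le hab] at hr
    have hr0 : 0 < r := ha.trans_le hr.1
    have h1 := intervalIntegral.integral_eq_sub_of_hasDerivAt (a := t₁) (b := t₂)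
      (fun t _ => hP r t hr0) ((slice_t cP' hr0).intervalIntegrable _ _)
    rw [← h1, ← intervalIntegral.integral_sub ((slice_t cQ' hr0).intervalIntegrable _ _)
      ((slice_t cD hr0).intervalIntegrable _ _)]
    exact intervalIntegral.integral_congr fun t _ => hPQ r t hr0
  have i1 := (integrable_rect cQ' ha (b := b) (t₁ := t₁) (t₂ := t₂)).integral_prod_left
  have i2 := (integrable_rect cD ha (b := b) (t₁ := t₁) (t₂ := t₂)).integral_prod_left
  have e2 : ∫ r in a..b, ∫ t in t₁..t₂, Q' r t = ∫ t in t₁..t₂, ∫ r in a..b, Q' r t := by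
    simp only [intervalIntegral.integral_of_le hab, intervalIntegral.integral_of_le ht]
    exact integral_integral_swap (integrable_rect cQ' ha)
  have e3 : ∫ t in t₁..t₂, ∫ r in a..b, Q' r t = ∫ t in t₁..t₂, (Q b t - Q a t) := by
    refine intervalIntegral.integral_congr fun t _ => ?_
    have hs : uIcc a b ⊆ Ioi 0 := by
      rw [uIcc_of_le hab]; exact fun x hx => lt_of_lt_of_le ha hx.1
    exact intervalIntegral.integral_eq_sub_of_hasDerivAt (fun r hr => hQ r t (hs hr))
      (((slice_r cQ' t).mono hs).intervalIntegrable)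
  rw [e1, intervalIntegral.integral_sub, e2, e3, intervalIntegral.integral_sub
    ((slice_t cQ hb).intervalIntegrable _ _) ((slice_t cQ ha).intervalIntegrable _ _)]
  · rw [intervalIntegrable_iff_integrableOn_Ioc_of_le hab]
    simp only [intervalIntegral.integral_of_le ht]; exact i1
  · rw [intervalIntegrable_iff_integrableOn_Ioc_of_le hab]
    simp only [intervalIntegral.integral_of_le ht]; exact i2
/-! ### Half-line wave equation with an inverse-square potential -/

/-- A function `w r t` on `(0, ∞) × ℝ` of class `C²`, recorded with its partial derivatives up to
order two; values at `r ≤ 0` are irrelevant. -/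
structure Jet where
  w : ℝ → ℝ → ℝ
  wr : ℝ → ℝ → ℝ
  wt : ℝ → ℝ → ℝ
  wrr : ℝ → ℝ → ℝ
  wrt : ℝ → ℝ → ℝ
  wtt : ℝ → ℝ → ℝ
  hr : ∀ r t, 0 < r → HasDerivAt (fun s => w s t) (wr r t) r
  ht : ∀ r t, 0 < r → HasDerivAt (fun s => w r s) (wt r t) t
  hrr : ∀ r t, 0 < r → HasDerivAt (fun s => wr s t) (wrr r t) r
  hrt : ∀ r t, 0 < r → HasDerivAt (fun s => wt s t) (wrt r t) r
  htr : ∀ r t, 0 < r → HasDerivAt (fun s => wr r s) (wrt r t) t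
  htt : ∀ r t, 0 < r → HasDerivAt (fun s => wt r s) (wtt r t) t
  c : ContinuousOn (fun q : ℝ × ℝ => w q.1 q.2) (Ioi 0 ×ˢ univ)
  cr : ContinuousOn (fun q : ℝ × ℝ => wr q.1 q.2) (Ioi 0 ×ˢ univ)
  ct : ContinuousOn (fun q : ℝ × ℝ => wt q.1 q.2) (Ioi 0 ×ˢ univ)
  crr : ContinuousOn (fun q : ℝ × ℝ => wrr q.1 q.2) (Ioi 0 ×ˢ univ)
  crt : ContinuousOn (fun q : ℝ × ℝ => wrt q.1 q.2) (Ioi 0 ×ˢ univ)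
  ctt : ContinuousOn (fun q : ℝ × ℝ => wtt q.1 q.2) (Ioi 0 ×ˢ univ)

/-- A `C²` solution of `w_tt - w_rr + μ w / r² + r^{-γ} |w|^{p-1} w = 0` on `(0, ∞) × ℝ` whose
energy is finite at each time. -/
structure FiniteWave (μ γ p : ℝ) extends Jet where
  pde : ∀ r t, 0 < r →
    wtt r t - wrr r t + μ * w r t / r ^ 2 + r ^ (-γ) * (|w r t| ^ (p - 1) * w r t) = 0
  ir : ∀ t, IntegrableOn (fun r => wr r t ^ 2) (Ioi 0)
  i0 : ∀ t, IntegrableOn (fun r => w r t ^ 2 / r ^ 2) (Ioi 0)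
  it : ∀ t, IntegrableOn (fun r => wt r t ^ 2) (Ioi 0)
  iF : ∀ t, IntegrableOn (fun r => r ^ (-γ) * |w r t| ^ (p + 1)) (Ioi 0)

namespace FiniteWave

variable {μ γ p : ℝ} (S : FiniteWave μ γ p)

/-- The potential energy density `r^{-γ} |w|^{p+1}`, without the factor `1/(p+1)`. -/
def F (r t : ℝ) : ℝ := r ^ (-γ) * |S.w r t| ^ (p + 1)

/-- The energy density on the half line. -/
def e (r t : ℝ) : ℝ :=
  1 / 2 * S.wr r t ^ 2 + μ / 2 * (S.w r t ^ 2 / r ^ 2) + 1 / 2 * S.wt r t ^ 2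
    + 1 / (p + 1) * S.F r t

/-- A nonnegative density dominating all the densities that occur. -/
def N (r t : ℝ) : ℝ := S.wr r t ^ 2 + S.w r t ^ 2 / r ^ 2 + S.wt r t ^ 2 + S.F r t

lemma F_nonneg {r : ℝ} (hr : 0 < r) (t : ℝ) : 0 ≤ S.F r t :=
  mul_nonneg (rpow_nonneg hr.le _) (rpow_nonneg (abs_nonneg _) _)

lemma N_nonneg {r : ℝ} (hr : 0 < r) (t : ℝ) : 0 ≤ S.N r t := by
  have := S.F_nonneg hr t
  unfold N; positivity

lemma cF (hp : 1 < p) :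
    ContinuousOn (fun q : ℝ × ℝ => S.F q.1 q.2) (Ioi 0 ×ˢ univ) := by
  unfold F
  refine ContinuousOn.mul ?_ ?_
  · exact continuousOn_fst.rpow_const fun q hq => Or.inl (ne_of_gt hq.1)
  · exact (continuous_abs.comp_continuousOn S.c).rpow_const fun q hq => Or.inr (by linarith)

lemma c2 : ContinuousOn (fun q : ℝ × ℝ => S.w q.1 q.2 ^ 2 / q.1 ^ 2) (Ioi 0 ×ˢ univ) :=
  (S.c.pow 2).div (continuousOn_fst.pow 2) fun _ hq => pow_ne_zero 2 (ne_of_gt hq.1)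

lemma cN (hp : 1 < p) :
    ContinuousOn (fun q : ℝ × ℝ => S.N q.1 q.2) (Ioi 0 ×ˢ univ) :=
  (((S.cr.pow 2).add S.c2).add (S.ct.pow 2)).add (S.cF hp)

lemma iN (t : ℝ) : IntegrableOn (fun r => S.N r t) (Ioi 0) :=
  (((S.ir t).add (S.i0 t)).add (S.it t)).add (S.iF t)

lemma ie (t : ℝ) : IntegrableOn (fun r => S.e r t) (Ioi 0) :=
  ((((S.ir t).const_mul _).add ((S.i0 t).const_mul _)).add ((S.it t).const_mul _)).add
    ((S.iF t).const_mul _)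

/-- Domination by `N` on a time slice. -/
lemma dom_slice {f : ℝ → ℝ} {s : Set ℝ} {C : ℝ} (t : ℝ) (hs : MeasurableSet s) (hs0 : s ⊆ Ioi 0)
    (hf : ContinuousOn f (Ioi 0)) (hb : ∀ r ∈ s, |f r| ≤ C * S.N r t) : IntegrableOn f s := by
  refine Integrable.mono' (((S.iN t).mono_set hs0).const_mul C)
    ((hf.mono hs0).aestronglyMeasurable hs) ?_
  exact (ae_restrict_iff' hs).2 (ae_of_all _ fun r hr => hb r hr)

lemma abs_mul_le_sq (x y : ℝ) : |x * y| ≤ (x ^ 2 + y ^ 2) / 2 := by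
  rw [abs_le]; constructor <;> nlinarith [sq_nonneg (x + y), sq_nonneg (x - y)]

lemma sq_terms_le_N {r : ℝ} (hr : 0 < r) (t : ℝ) :
    S.wr r t ^ 2 ≤ S.N r t ∧ S.w r t ^ 2 / r ^ 2 ≤ S.N r t ∧ S.wt r t ^ 2 ≤ S.N r t ∧
      S.F r t ≤ S.N r t ∧ |S.wr r t * S.wt r t| ≤ S.N r t ∧
      |S.w r t * S.wr r t / r| ≤ S.N r t := by
  have h1 := S.F_nonneg hr t
  have h2 : 0 ≤ S.w r t ^ 2 / r ^ 2 := by positivity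
  have h3 := sq_nonneg (S.wr r t)
  have h4 := sq_nonneg (S.wt r t)
  have h5 := abs_mul_le_sq (S.wr r t) (S.wt r t)
  have h6 := abs_mul_le_sq (S.w r t / r) (S.wr r t)
  rw [div_pow, div_mul_eq_mul_div] at h6
  unfold N
  refine ⟨?_, ?_, ?_, ?_, ?_, ?_⟩ <;> linarith

/-! ### Hardy inequalities -/

lemma hasDerivAt_sq_div {r : ℝ} (hr : 0 < r) (t : ℝ) :
    HasDerivAt (fun s => S.w s t ^ 2 / s)
      (2 * (S.w r t * S.wr r t / r) - S.w r t ^ 2 / r ^ 2) r := by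
  refine (((S.hr r t hr).fun_pow 2).fun_div (hasDerivAt_id' r) hr.ne').congr_deriv ?_
  field_simp
  ring

lemma cont_sq_div (t : ℝ) : ContinuousOn
    (fun r => 2 * (S.w r t * S.wr r t / r) - S.w r t ^ 2 / r ^ 2) (Ioi 0) :=
  (((((slice_r S.c t).mul (slice_r S.cr t)).div continuousOn_id
    (fun _ hq => ne_of_gt hq)).const_mul 2)).sub (slice_r (f := fun r t => S.w r t ^ 2 / r ^ 2)
      S.c2 t)

lemma int_sq_div (t : ℝ) : IntegrableOn
    (fun r => 2 * (S.w r t * S.wr r t / r) - S.w r t ^ 2 / r ^ 2) (Ioi 0) := by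
  refine S.dom_slice (C := 3) t measurableSet_Ioi subset_rfl (S.cont_sq_div t) fun r hr => ?_
  obtain ⟨-, h2, -, -, -, h6⟩ := S.sq_terms_le_N hr t
  have h2' : 0 ≤ S.w r t ^ 2 / r ^ 2 := by positivity
  rw [abs_le] at h6 ⊢
  constructor <;> linarith

lemma integral_sq_div_Ioc {R : ℝ} (hR : 0 < R) (t : ℝ) :
    ∫ r in Ioc 0 R, (2 * (S.w r t * S.wr r t / r) - S.w r t ^ 2 / r ^ 2) = S.w R t ^ 2 / R := by
  refine integral_deriv_Ioc (G := fun r => S.w r t ^ 2 / r) hR (fun r hr => S.hasDerivAt_sq_div hr t) (S.cont_sq_div t)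
    ((S.int_sq_div t).mono_set Ioc_subset_Ioi_self) ((S.i0 t).mono_set Ioc_subset_Ioi_self) ?_
  intro r hr
  have hr0 : 0 < r := hr.1
  rw [abs_of_nonneg (by positivity), abs_of_nonneg (by positivity)]
  apply le_of_eq; field_simp

lemma integral_sq_div_Ioi {R : ℝ} (hR : 0 < R) (t : ℝ) :
    ∫ r in Ioi R, (2 * (S.w r t * S.wr r t / r) - S.w r t ^ 2 / r ^ 2) = -(S.w R t ^ 2 / R) := by
  have hs : Ioi R ⊆ Ioi 0 := Ioi_subset_Ioi hR.le
  refine integral_deriv_Ioi (G := fun r => S.w r t ^ 2 / r) hR (fun r hr => S.hasDerivAt_sq_div hr t) (S.cont_sq_div t)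
    ((S.int_sq_div t).mono_set hs) ((S.i0 t).mono_set hs) ?_
  intro r hr
  have hr0 : 0 < r := hs hr
  rw [abs_of_nonneg (by positivity), abs_of_nonneg (by positivity)]
  apply le_of_eq; field_simp

lemma setIntegral_split {f : ℝ → ℝ} {R : ℝ} (hR : 0 < R) (hf : IntegrableOn f (Ioi 0)) :
    ∫ r in Ioi 0, f r = (∫ r in Ioc 0 R, f r) + ∫ r in Ioi R, f r := by
  rw [← Ioc_union_Ioi_eq_Ioi hR.le]
  exact setIntegral_union (Ioc_disjoint_Ioi le_rfl) measurableSet_Ioi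
    (hf.mono_set Ioc_subset_Ioi_self) (hf.mono_set (Ioi_subset_Ioi hR.le))

lemma integral_sq_div (t : ℝ) :
    ∫ r in Ioi 0, (2 * (S.w r t * S.wr r t / r) - S.w r t ^ 2 / r ^ 2) = 0 := by
  rw [setIntegral_split one_pos (S.int_sq_div t), S.integral_sq_div_Ioc one_pos,
    S.integral_sq_div_Ioi one_pos]
  ring

/-- Hardy's inequality on the half line, by expanding `(w_r - w / (2r))² ≥ 0`. -/
lemma hardy (t : ℝ) :
    1 / 4 * ∫ r in Ioi 0, S.w r t ^ 2 / r ^ 2 ≤ ∫ r in Ioi 0, S.wr r t ^ 2 := by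
  have h0 := S.integral_sq_div t
  have h1 : 0 ≤ ∫ r in Ioi 0, (S.wr r t ^ 2
      - 1 / 2 * (2 * (S.w r t * S.wr r t / r) - S.w r t ^ 2 / r ^ 2)
      - 1 / 4 * (S.w r t ^ 2 / r ^ 2)) := by
    refine setIntegral_nonneg measurableSet_Ioi fun r hr => ?_
    have hr0 : (0:ℝ) < r := hr
    have : S.wr r t ^ 2 - 1 / 2 * (2 * (S.w r t * S.wr r t / r) - S.w r t ^ 2 / r ^ 2)
      - 1 / 4 * (S.w r t ^ 2 / r ^ 2) = (S.wr r t - S.w r t / (2 * r)) ^ 2 := by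
      field_simp; ring
    rw [this]; positivity
  rw [integral_sub, integral_sub, integral_const_mul, integral_const_mul, h0] at h1
  · linarith
  · exact S.ir t
  · exact (S.int_sq_div t).const_mul _
  · exact (S.ir t).sub ((S.int_sq_div t).const_mul _)
  · exact (S.i0 t).const_mul _

/-- Hardy's inequality on `(0, R)` with the weight `R² - r²`, which vanishes at `r = R`. -/
lemma hardy_weighted {R : ℝ} (hR : 0 < R) (t : ℝ) :
    0 ≤ ∫ r in Ioc 0 R, ((R ^ 2 - r ^ 2) * S.wr r t ^ 2
      - (R ^ 2 / 4) * (S.w r t ^ 2 / r ^ 2)) := by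
  have hs : Ioc 0 R ⊆ Ioi 0 := Ioc_subset_Ioi_self
  set G' : ℝ → ℝ := fun r => (R ^ 2 - r ^ 2) * (S.w r t * S.wr r t / r)
      - (R ^ 2 + r ^ 2) / 2 * (S.w r t ^ 2 / r ^ 2) with hG'
  have c1 : ContinuousOn (fun r => S.w r t ^ 2 / r ^ 2) (Ioi 0) :=
    slice_r (f := fun r t => S.w r t ^ 2 / r ^ 2) S.c2 t
  have hc : ContinuousOn G' (Ioi 0) :=
    ContinuousOn.sub (ContinuousOn.mul (by fun_prop) (((slice_r S.c t).mul
      (slice_r S.cr t)).div continuousOn_id (fun _ hq => ne_of_gt hq)))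
      (ContinuousOn.mul (by fun_prop) c1)
  have hi : IntegrableOn G' (Ioc 0 R) := by
    refine S.dom_slice (C := 2 * R ^ 2) t measurableSet_Ioc hs hc fun r hr => ?_
    obtain ⟨-, h2, -, -, -, h6⟩ := S.sq_terms_le_N hr.1 t
    have hr0 : 0 < r := hr.1
    have h2' : 0 ≤ S.w r t ^ 2 / r ^ 2 := by positivity
    have hrR : r ^ 2 ≤ R ^ 2 := pow_le_pow_left₀ hr0.le hr.2 2
    have hN := S.N_nonneg hr0 t
    calc |G' r| ≤ |(R ^ 2 - r ^ 2) * (S.w r t * S.wr r t / r)|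
          + |(R ^ 2 + r ^ 2) / 2 * (S.w r t ^ 2 / r ^ 2)| := abs_sub _ _
      _ ≤ R ^ 2 * S.N r t + R ^ 2 * S.N r t := by
        rw [abs_mul, abs_mul]
        gcongr
        · rw [abs_of_nonneg (by linarith)]; nlinarith
        · rw [abs_of_nonneg (by positivity)]; linarith
        · rw [abs_of_nonneg h2']; exact h2
      _ = 2 * R ^ 2 * S.N r t := by ring
  have hG : ∀ r, 0 < r →
      HasDerivAt (fun s => (R ^ 2 - s ^ 2) * (S.w s t ^ 2 / s) / 2) (G' r) r := by
    intro r hr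
    refine (((((hasDerivAt_id' r).fun_pow 2).const_sub (R ^ 2)).fun_mul
      (S.hasDerivAt_sq_div hr t)).div_const 2).congr_deriv ?_
    simp only [hG']
    field_simp
    ring
  have h0 : ∫ r in Ioc 0 R, G' r = 0 := by
    rw [integral_deriv_Ioc (q := fun r => R ^ 2 * (S.w r t ^ 2 / r ^ 2)) hR hG hc hi
      (((S.i0 t).mono_set hs).const_mul _)]
    · simp
    · intro r hr
      have hr0 : 0 < r := hr.1
      have hrR : r ^ 2 ≤ R ^ 2 := pow_le_pow_left₀ hr0.le hr.2.le 2
      have h3 : 0 ≤ R ^ 2 - r ^ 2 := by linarith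
      rw [abs_of_nonneg (by positivity), abs_of_nonneg (by positivity)]
      have : r * (R ^ 2 * (S.w r t ^ 2 / r ^ 2)) = R ^ 2 * (S.w r t ^ 2 / r) := by
        field_simp
      rw [this]
      have h4 : 0 ≤ S.w r t ^ 2 / r := by positivity
      nlinarith [mul_nonneg (sq_nonneg r) h4, mul_nonneg (sq_nonneg R) h4]
  have i1 : IntegrableOn (fun r => (R ^ 2 - r ^ 2) * S.wr r t ^ 2
      - (R ^ 2 / 4) * (S.w r t ^ 2 / r ^ 2)) (Ioc 0 R) := by
    refine S.dom_slice (C := 2 * R ^ 2) t measurableSet_Ioc hs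
      (ContinuousOn.sub (ContinuousOn.mul (by fun_prop) ((slice_r S.cr t).pow 2))
        (c1.const_mul _)) fun r hr => ?_
    obtain ⟨h1, h2, -, -, -, -⟩ := S.sq_terms_le_N hr.1 t
    have hr0 : 0 < r := hr.1
    have h2' : 0 ≤ S.w r t ^ 2 / r ^ 2 := by positivity
    have hrR : r ^ 2 ≤ R ^ 2 := pow_le_pow_left₀ hr0.le hr.2 2
    have hN := S.N_nonneg hr0 t
    calc |_| ≤ |(R ^ 2 - r ^ 2) * S.wr r t ^ 2|
          + |R ^ 2 / 4 * (S.w r t ^ 2 / r ^ 2)| := abs_sub _ _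
      _ ≤ R ^ 2 * S.N r t + R ^ 2 * S.N r t := by
        rw [abs_mul, abs_mul]
        gcongr
        · rw [abs_of_nonneg (by linarith)]; nlinarith
        · rw [abs_of_nonneg (by positivity)]; exact h1
        · rw [abs_of_nonneg (by positivity)]; linarith [sq_nonneg R]
        · rw [abs_of_nonneg h2']; exact h2
      _ = 2 * R ^ 2 * S.N r t := by ring
  have h1 : 0 ≤ ∫ r in Ioc 0 R, (((R ^ 2 - r ^ 2) * S.wr r t ^ 2
      - (R ^ 2 / 4) * (S.w r t ^ 2 / r ^ 2)) - G' r) := by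
    refine setIntegral_nonneg measurableSet_Ioc fun r hr => ?_
    have hr0 : (0:ℝ) < r := hr.1
    have hrR : r ^ 2 ≤ R ^ 2 := pow_le_pow_left₀ hr0.le hr.2 2
    have : ((R ^ 2 - r ^ 2) * S.wr r t ^ 2 - (R ^ 2 / 4) * (S.w r t ^ 2 / r ^ 2)) - G' r
        = (R ^ 2 - r ^ 2) * (S.wr r t - S.w r t / (2 * r)) ^ 2 + 3 / 4 * S.w r t ^ 2 := by
      simp only [hG']; field_simp; ring
    rw [this]
    have h3 : 0 ≤ R ^ 2 - r ^ 2 := by linarith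
    positivity
  rw [integral_sub i1 hi, h0, sub_zero] at h1
  exact h1

end FiniteWave

/-- A finite-energy solution whose energy is equal to `E` at all times. -/
structure Wave (μ γ p E : ℝ) extends FiniteWave μ γ p where
  e_integral : ∀ t, ∫ r in Ioi 0, toFiniteWave.e r t = E

namespace Wave

open FiniteWave

variable {μ γ p E : ℝ} (S : Wave μ γ p E)

/-- Conservation of energy and Hardy's inequality bound `N` in `L¹`, uniformly in time. -/
lemma N_bound (hp : 1 < p) (hμ : -1 / 4 < μ) : ∃ M, ∀ t, ∫ r in Ioi 0, S.N r t ≤ M := by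
  have hμ' : 0 < μ + 1 / 4 := by linarith
  set B₀ := 2 * E / (μ + 1 / 4) with hB₀
  refine ⟨(2 * E + |μ| * B₀) + B₀ + (2 * E + |μ| * B₀)
    + (p + 1) * (E + |μ| * B₀), fun t => ?_⟩
  have hH := S.hardy t
  have hE := S.e_integral t
  have e1 : ∫ r in Ioi 0, S.N r t = (∫ r in Ioi 0, S.wr r t ^ 2)
      + (∫ r in Ioi 0, S.w r t ^ 2 / r ^ 2) + (∫ r in Ioi 0, S.wt r t ^ 2)
      + ∫ r in Ioi 0, S.F r t := by
    unfold N
    rw [integral_add, integral_add, integral_add]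
    · exact S.ir t
    · exact S.i0 t
    · exact (S.ir t).add (S.i0 t)
    · exact S.it t
    · exact ((S.ir t).add (S.i0 t)).add (S.it t)
    · exact S.iF t
  have e2 : ∫ r in Ioi 0, S.e r t = 1 / 2 * (∫ r in Ioi 0, S.wr r t ^ 2)
      + μ / 2 * (∫ r in Ioi 0, S.w r t ^ 2 / r ^ 2) + 1 / 2 * (∫ r in Ioi 0, S.wt r t ^ 2)
      + 1 / (p + 1) * ∫ r in Ioi 0, S.F r t := by
    unfold e
    rw [integral_add, integral_add, integral_add]
    · simp only [integral_const_mul]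
    · exact (S.ir t).const_mul _
    · exact (S.i0 t).const_mul _
    · exact ((S.ir t).const_mul _).add ((S.i0 t).const_mul _)
    · exact (S.it t).const_mul _
    · exact (((S.ir t).const_mul _).add ((S.i0 t).const_mul _)).add ((S.it t).const_mul _)
    · exact (S.iF t).const_mul _
  rw [e2] at hE
  rw [e1]
  have pA : 0 ≤ ∫ r in Ioi 0, S.wr r t ^ 2 := integral_nonneg fun r => sq_nonneg _
  have pB : 0 ≤ ∫ r in Ioi 0, S.w r t ^ 2 / r ^ 2 := integral_nonneg fun r => by positivity
  have pC : 0 ≤ ∫ r in Ioi 0, S.wt r t ^ 2 := integral_nonneg fun r => sq_nonneg _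
  have pD : 0 ≤ ∫ r in Ioi 0, S.F r t :=
    setIntegral_nonneg measurableSet_Ioi fun r hr => S.F_nonneg hr t
  set A := ∫ r in Ioi 0, S.wr r t ^ 2
  set B := ∫ r in Ioi 0, S.w r t ^ 2 / r ^ 2
  set C := ∫ r in Ioi 0, S.wt r t ^ 2
  set D := ∫ r in Ioi 0, S.F r t
  have hp1 : 0 < p + 1 := by linarith
  have pD' : 0 ≤ 1 / (p + 1) * D := by positivity
  have hB : B ≤ B₀ := by
    rw [hB₀, le_div_iff₀ hμ']; nlinarith
  have hμB : -(μ * B) ≤ |μ| * B₀ := by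
    calc -(μ * B) ≤ |μ| * B := by nlinarith [neg_abs_le μ]
      _ ≤ _ := by gcongr
  have hD : D = (p + 1) * (1 / (p + 1) * D) := by field_simp
  have hD' : 1 / (p + 1) * D ≤ E + |μ| * B₀ := by
    have : 0 ≤ |μ| * B₀ := mul_nonneg (abs_nonneg _) (pB.trans hB)
    linarith
  have hD'' : D ≤ (p + 1) * (E + |μ| * B₀) := by
    rw [hD]; gcongr
  linarith

end Wave
/-! ### The Morawetz identity -/

namespace Wave

open FiniteWave

variable {μ γ p E : ℝ} (S : Wave μ γ p E)

lemma N_integrable_prod (hp : 1 < p) (hμ : -1 / 4 < μ) (t₁ t₂ : ℝ) :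
    Integrable (Function.uncurry S.N)
      ((volume.restrict (Ioi 0)).prod (volume.restrict (Ioc t₁ t₂))) := by
  have hm : AEStronglyMeasurable (Function.uncurry S.N)
      ((volume.restrict (Ioi 0)).prod (volume.restrict (Ioc t₁ t₂))) := by
    rw [Measure.prod_restrict]
    exact ((S.cN hp).mono (prod_mono subset_rfl (subset_univ _))).aestronglyMeasurable
      (measurableSet_Ioi.prod measurableSet_Ioc)
  obtain ⟨M, hM⟩ := S.N_bound hp hμ
  rw [integrable_prod_iff' hm]
  refine ⟨ae_of_all _ fun t => S.iN t, ?_⟩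
  refine Integrable.mono' (integrable_const M) hm.norm.prod_swap.integral_prod_right'
    (ae_of_all _ fun t => ?_)
  rw [Real.norm_of_nonneg (integral_nonneg fun r => norm_nonneg _)]
  refine le_trans (le_of_eq ?_) (hM t)
  refine setIntegral_congr_fun measurableSet_Ioi fun r hr => ?_
  exact Real.norm_of_nonneg (S.N_nonneg hr t)

/-- Domination by `N` in space-time. -/
lemma dom_prod (hp : 1 < p) (hμ : -1 / 4 < μ) {f : ℝ → ℝ → ℝ} {s : Set ℝ} {C : ℝ} (t₁ t₂ : ℝ)
    (hs : MeasurableSet s) (hs0 : s ⊆ Ioi 0)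
    (hf : ContinuousOn (fun q : ℝ × ℝ => f q.1 q.2) (Ioi 0 ×ˢ univ))
    (hb : ∀ r ∈ s, ∀ t, |f r t| ≤ C * S.N r t) :
    Integrable (Function.uncurry f)
      ((volume.restrict s).prod (volume.restrict (Ioc t₁ t₂))) := by
  have h := S.N_integrable_prod hp hμ t₁ t₂
  rw [Measure.prod_restrict] at h ⊢
  have hms := hs.prod (measurableSet_Ioc (a := t₁) (b := t₂))
  refine Integrable.mono'
    ((IntegrableOn.mono_set h (prod_mono hs0 subset_rfl)).const_mul C)
    ((hf.mono (prod_mono hs0 (subset_univ _))).aestronglyMeasurable hms) ?_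
  exact (ae_restrict_iff' hms).2 (ae_of_all _ fun q hq => hb q.1 hq.1 q.2)

/-- The Lagrangian-type density that is transported in the radial direction. -/
def L (r t : ℝ) : ℝ :=
  1 / 2 * S.wr r t ^ 2 + 1 / 2 * S.wt r t ^ 2 - μ / 2 * (S.w r t ^ 2 / r ^ 2)
    - 1 / (p + 1) * S.F r t

/-- The radial derivative of `L`. -/
def Lr (r t : ℝ) : ℝ :=
  S.wr r t * S.wrr r t + S.wt r t * S.wrt r t
    - μ * (S.w r t * S.wr r t / r ^ 2) + μ * (S.w r t ^ 2 / r ^ 2 / r)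
    - r ^ (-γ) * (|S.w r t| ^ (p - 1) * S.w r t) * S.wr r t + γ / (p + 1) * (S.F r t / r)

/-- The bulk term of the Morawetz identity with multiplier `φ(r) = α + β r`. -/
def D (α β r t : ℝ) : ℝ :=
  β * S.L r t + (α + β * r) * (μ * (S.w r t ^ 2 / r ^ 2 / r) + γ / (p + 1) * (S.F r t / r))

lemma cL (hp : 1 < p) : ContinuousOn (fun q : ℝ × ℝ => S.L q.1 q.2) (Ioi 0 ×ˢ univ) :=
  ((((S.cr.pow 2).const_mul _).add ((S.ct.pow 2).const_mul _)).sub (S.c2.const_mul _)).sub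
    ((S.cF hp).const_mul _)

lemma ce (hp : 1 < p) : ContinuousOn (fun q : ℝ × ℝ => S.e q.1 q.2) (Ioi 0 ×ˢ univ) :=
  ((((S.cr.pow 2).const_mul _).add (S.c2.const_mul _)).add ((S.ct.pow 2).const_mul _)).add
    ((S.cF hp).const_mul _)

lemma c3 : ContinuousOn (fun q : ℝ × ℝ => S.w q.1 q.2 ^ 2 / q.1 ^ 2 / q.1) (Ioi 0 ×ˢ univ) :=
  S.c2.div continuousOn_fst fun _ hq => ne_of_gt hq.1

lemma cFr (hp : 1 < p) :
    ContinuousOn (fun q : ℝ × ℝ => S.F q.1 q.2 / q.1) (Ioi 0 ×ˢ univ) :=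
  (S.cF hp).div continuousOn_fst fun _ hq => ne_of_gt hq.1

lemma cLr (hp : 1 < p) : ContinuousOn (fun q : ℝ × ℝ => S.Lr q.1 q.2) (Ioi 0 ×ˢ univ) := by
  have h1 : ContinuousOn (fun q : ℝ × ℝ => q.1 ^ (-γ) *
      (|S.w q.1 q.2| ^ (p - 1) * S.w q.1 q.2) * S.wr q.1 q.2) (Ioi 0 ×ˢ univ) := by
    refine ContinuousOn.mul (ContinuousOn.mul ?_ (ContinuousOn.mul ?_ S.c)) S.cr
    · exact continuousOn_fst.rpow_const fun q hq => Or.inl (ne_of_gt hq.1)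
    · exact (continuous_abs.comp_continuousOn S.c).rpow_const fun q hq => Or.inr (by linarith)
  have h2 : ContinuousOn (fun q : ℝ × ℝ => S.w q.1 q.2 * S.wr q.1 q.2 / q.1 ^ 2)
      (Ioi 0 ×ˢ univ) :=
    (S.c.mul S.cr).div (continuousOn_fst.pow 2) fun _ hq => pow_ne_zero 2 (ne_of_gt hq.1)
  exact (((((S.cr.mul S.crr).add (S.ct.mul S.crt)).sub (h2.const_mul _)).add
    (S.c3.const_mul _)).sub h1).add ((S.cFr hp).const_mul _)

lemma cD (hp : 1 < p) (α β : ℝ) :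
    ContinuousOn (fun q : ℝ × ℝ => S.D α β q.1 q.2) (Ioi 0 ×ˢ univ) :=
  ((S.cL hp).const_mul _).add (ContinuousOn.mul (by fun_prop)
    ((S.c3.const_mul _).add ((S.cFr hp).const_mul _)))

lemma hasDerivAt_F (hp : 1 < p) {r : ℝ} (hr : 0 < r) (t : ℝ) :
    HasDerivAt (fun s => S.F s t)
      (-γ * (S.F r t / r) +
        (p + 1) * (r ^ (-γ) * (|S.w r t| ^ (p - 1) * S.w r t) * S.wr r t)) r := by
  have h1 := Real.hasDerivAt_rpow_const (x := r) (p := -γ) (Or.inl hr.ne')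
  have h2 := (hasDerivAt_abs_rpow (S.w r t) (p := p + 1) (by linarith)).comp r (S.hr r t hr)
  refine (h1.fun_mul h2).congr_deriv ?_
  rw [Real.rpow_sub_one hr.ne', show p + 1 - 2 = p - 1 by ring]
  simp only [F, Function.comp]
  ring

lemma hasDerivAt_L (hp : 1 < p) {r : ℝ} (hr : 0 < r) (t : ℝ) :
    HasDerivAt (fun s => S.L s t) (S.Lr r t) r := by
  have hp1 : p + 1 ≠ 0 := by linarith
  have h2 : HasDerivAt (fun s => S.w s t ^ 2 / s ^ 2)
      (2 * (S.w r t * S.wr r t / r ^ 2) - 2 * (S.w r t ^ 2 / r ^ 2 / r)) r := by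
    refine (((S.hr r t hr).fun_pow 2).fun_div ((hasDerivAt_id' r).fun_pow 2)
      (pow_ne_zero 2 hr.ne')).congr_deriv ?_
    field_simp
    ring
  refine ((((((S.hrr r t hr).fun_pow 2).const_mul (1 / 2)).fun_add
    (((S.hrt r t hr).fun_pow 2).const_mul (1 / 2))).fun_sub (h2.const_mul (μ / 2))).fun_sub
    ((S.hasDerivAt_F hp hr t).const_mul (1 / (p + 1)))).congr_deriv ?_
  unfold Lr
  field_simp
  ring

lemma rect_morawetz (hp : 1 < p) (α β : ℝ) {a b t₁ t₂ : ℝ} (ha : 0 < a) (hab : a ≤ b)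
    (ht : t₁ ≤ t₂) :
    ∫ r in a..b, ((α + β * r) * (S.wr r t₂ * S.wt r t₂)
        - (α + β * r) * (S.wr r t₁ * S.wt r t₁)) =
      (∫ t in t₁..t₂, (α + β * b) * S.L b t) - (∫ t in t₁..t₂, (α + β * a) * S.L a t)
        - ∫ r in a..b, ∫ t in t₁..t₂, S.D α β r t := by
  refine rect_identity (P := fun r t => (α + β * r) * (S.wr r t * S.wt r t))
    (Q := fun r t => (α + β * r) * S.L r t)
    (P' := fun r t => (α + β * r) * (S.wrt r t * S.wt r t + S.wr r t * S.wtt r t))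
    (Q' := fun r t => β * S.L r t + (α + β * r) * S.Lr r t)
    ha hab ht ?_ ?_ ?_ ?_ ?_ ?_
  · exact fun r t hr => ((S.htr r t hr).fun_mul (S.htt r t hr)).const_mul _
  · intro r t hr
    refine ((((hasDerivAt_id' r).const_mul β).const_add α).fun_mul
      (S.hasDerivAt_L hp hr t)).congr_deriv ?_
    ring
  · intro r t hr
    have hpde := S.pde r t hr
    have : S.wtt r t = S.wrr r t - μ * S.w r t / r ^ 2
      - r ^ (-γ) * (|S.w r t| ^ (p - 1) * S.w r t) := by linarith
    simp only [this, D, Lr]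
    ring
  · exact ContinuousOn.mul (by fun_prop) ((S.crt.mul S.ct).add (S.cr.mul S.ctt))
  · exact ContinuousOn.mul (by fun_prop) (S.cL hp)
  · exact ((S.cL hp).const_mul _).add (ContinuousOn.mul (by fun_prop) (S.cLr hp))

lemma F_div_le (hp : 1 < p) {r : ℝ} (hr : 0 < r) (t : ℝ) :
    0 ≤ 1 / (p + 1) * S.F r t ∧ 1 / (p + 1) * S.F r t ≤ S.F r t := by
  have h := S.F_nonneg hr t
  have h1 : 0 < p + 1 := by linarith
  have h2 : 1 / (p + 1) ≤ 1 := by rw [div_le_one h1]; linarith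
  exact ⟨by positivity, mul_le_of_le_one_left h h2⟩

lemma abs_L_le (hp : 1 < p) {r : ℝ} (hr : 0 < r) (t : ℝ) :
    |S.L r t| ≤ (1 + |μ|) * S.N r t := by
  obtain ⟨h1, h2⟩ := S.F_div_le hp hr t
  have h3 : 0 ≤ S.w r t ^ 2 / r ^ 2 := by positivity
  have h4 : |μ * (S.w r t ^ 2 / r ^ 2)| ≤ |μ| * S.N r t := by
    rw [abs_mul, abs_of_nonneg h3]
    exact mul_le_mul_of_nonneg_left (S.sq_terms_le_N hr t).2.1 (abs_nonneg _)
  have h5 := sq_nonneg (S.wr r t)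
  have h6 := sq_nonneg (S.wt r t)
  have h7 : 0 ≤ |μ| * S.N r t := mul_nonneg (abs_nonneg _) (S.N_nonneg hr t)
  have h8 := abs_le.1 h4
  have h9 : S.wr r t ^ 2 + S.wt r t ^ 2 + S.F r t ≤ S.N r t := by unfold N; linarith
  rw [add_mul, one_mul, abs_le]
  unfold L
  constructor <;> linarith [h8.1, h8.2]

lemma abs_e_le (hp : 1 < p) {r : ℝ} (hr : 0 < r) (t : ℝ) :
    |S.e r t| ≤ (1 + |μ|) * S.N r t := by
  obtain ⟨h1, h2⟩ := S.F_div_le hp hr t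
  have h3 : 0 ≤ S.w r t ^ 2 / r ^ 2 := by positivity
  have h4 : |μ * (S.w r t ^ 2 / r ^ 2)| ≤ |μ| * S.N r t := by
    rw [abs_mul, abs_of_nonneg h3]
    exact mul_le_mul_of_nonneg_left (S.sq_terms_le_N hr t).2.1 (abs_nonneg _)
  have h5 := sq_nonneg (S.wr r t)
  have h6 := sq_nonneg (S.wt r t)
  have h7 : 0 ≤ |μ| * S.N r t := mul_nonneg (abs_nonneg _) (S.N_nonneg hr t)
  have h8 := abs_le.1 h4
  have h9 : S.wr r t ^ 2 + S.wt r t ^ 2 + S.F r t ≤ S.N r t := by unfold N; linarith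
  rw [add_mul, one_mul, abs_le]
  unfold e
  constructor <;> linarith [h8.1, h8.2]

lemma abs_D_le (hp : 1 < p) (hγ : 2 ≤ γ) {α β r : ℝ} (hr : 0 < r) (hβ : |β| ≤ 1)
    (h0 : 0 ≤ α + β * r) (h1 : α + β * r ≤ r) (t : ℝ) :
    |S.D α β r t| ≤ (1 + 2 * |μ| + γ) * S.N r t := by
  have hL := S.abs_L_le hp hr t
  obtain ⟨f1, f2⟩ := S.F_div_le hp hr t
  obtain ⟨-, z1, -, z2, -, -⟩ := S.sq_terms_le_N hr t
  have z0 : 0 ≤ S.w r t ^ 2 / r ^ 2 := by positivity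
  have hq0 : 0 ≤ (α + β * r) / r := by positivity
  have hq1 : (α + β * r) / r ≤ 1 := by rw [div_le_one hr]; exact h1
  have e1 : S.D α β r t = β * S.L r t + (α + β * r) / r *
      (μ * (S.w r t ^ 2 / r ^ 2) + γ * (1 / (p + 1) * S.F r t)) := by
    unfold D; ring
  have b1 : |β * S.L r t| ≤ 1 * ((1 + |μ|) * S.N r t) := by
    rw [abs_mul]; gcongr
  have b2 : |μ * (S.w r t ^ 2 / r ^ 2) + γ * (1 / (p + 1) * S.F r t)|
      ≤ |μ| * S.N r t + γ * S.N r t := by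
    refine (abs_add_le _ _).trans ?_
    rw [abs_mul, abs_mul, abs_of_nonneg z0, abs_of_nonneg f1,
      abs_of_nonneg (by linarith : 0 ≤ γ)]
    gcongr
    exact f2.trans z2
  have b3 := mul_le_mul hq1 b2 (abs_nonneg _) zero_le_one
  rw [e1]
  refine (abs_add_le _ _).trans ?_
  rw [abs_mul ((α + β * r) / r), abs_of_nonneg hq0]
  linarith

/-- The Morawetz identity with multiplier `φ(r) = r` on `0 < r ≤ R`: there is no contribution from
`r = 0`. -/
lemma morawetz_inner (hp : 1 < p) (hμ : -1 / 4 < μ) (hγ : 2 ≤ γ) {R t₁ t₂ : ℝ} (hR : 0 < R)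
    (ht : t₁ ≤ t₂) :
    ∫ r in Ioc 0 R, ((0 + 1 * r) * (S.wr r t₂ * S.wt r t₂)
        - (0 + 1 * r) * (S.wr r t₁ * S.wt r t₁)) =
      R * (∫ t in t₁..t₂, S.L R t) - ∫ r in Ioc 0 R, ∫ t in t₁..t₂, S.D 0 1 r t := by
  have hs : Ioc 0 R ⊆ Ioi 0 := Ioc_subset_Ioi_self
  have iP : ∀ t, IntegrableOn (fun r => (0 + 1 * r) * (S.wr r t * S.wt r t)) (Ioc 0 R) := by
    refine fun t => S.dom_slice (C := R) t measurableSet_Ioc hs (ContinuousOn.mul (by fun_prop)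
      ((slice_r S.cr t).mul (slice_r S.ct t))) fun r hr => ?_
    have hr0 : 0 < r := hr.1
    rw [abs_mul, zero_add, one_mul, abs_of_pos hr0]
    exact mul_le_mul hr.2 (S.sq_terms_le_N hr0 t).2.2.2.2.1 (abs_nonneg _) hR.le
  have iD : IntegrableOn (fun r => ∫ t in t₁..t₂, S.D 0 1 r t) (Ioc 0 R) := by
    simp only [intervalIntegral.integral_of_le ht]
    refine (S.dom_prod hp hμ (C := 1 + 2 * |μ| + γ) t₁ t₂ measurableSet_Ioc hs (S.cD hp 0 1)
      fun r hr t => S.abs_D_le hp hγ hr.1 (by simp) ?_ ?_ t).integral_prod_left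
    · have := hr.1; linarith
    · linarith
  have iL : IntegrableOn (fun r => ∫ t in t₁..t₂, S.L r t) (Ioc 0 R) := by
    simp only [intervalIntegral.integral_of_le ht]
    exact (S.dom_prod hp hμ (C := 1 + |μ|) t₁ t₂ measurableSet_Ioc hs (S.cL hp)
      fun r hr t => S.abs_L_le hp hr.1 t).integral_prod_left
  have lim : Tendsto (fun a => a * ∫ t in t₁..t₂, S.L a t) (𝓝[>] 0)
      (𝓝 (R * (∫ t in t₁..t₂, S.L R t) - (∫ r in Ioc 0 R, ∫ t in t₁..t₂, S.D 0 1 r t)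
        - ∫ r in Ioc 0 R, ((0 + 1 * r) * (S.wr r t₂ * S.wt r t₂)
        - (0 + 1 * r) * (S.wr r t₁ * S.wt r t₁)))) := by
    refine ((tendsto_const_nhds.sub (tendsto_integral_left hR iD)).sub
      (tendsto_integral_left hR ((iP t₂).sub (iP t₁)))).congr' ?_
    filter_upwards [Ioo_mem_nhdsGT hR] with a ha
    have := S.rect_morawetz hp 0 1 ha.1 ha.2.le ht
    simp only [zero_add, one_mul, intervalIntegral.integral_const_mul] at this
    simp only [Pi.sub_apply, zero_add, one_mul]
    linarith
  have := limit_zero_at_zero hR iL (fun r hr => by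
    rw [abs_mul, abs_of_pos hr.1]) lim
  linarith

/-- The Morawetz identity with multiplier `φ(r) = R` on `r > R`: there is no contribution from
infinity. -/
lemma morawetz_outer (hp : 1 < p) (hμ : -1 / 4 < μ) (hγ : 2 ≤ γ) {R t₁ t₂ : ℝ} (hR : 0 < R)
    (ht : t₁ ≤ t₂) :
    ∫ r in Ioi R, ((R + 0 * r) * (S.wr r t₂ * S.wt r t₂)
        - (R + 0 * r) * (S.wr r t₁ * S.wt r t₁)) =
      - (R * (∫ t in t₁..t₂, S.L R t)) - ∫ r in Ioi R, ∫ t in t₁..t₂, S.D R 0 r t := by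
  have hs : Ioi R ⊆ Ioi 0 := Ioi_subset_Ioi hR.le
  have iP : ∀ t, IntegrableOn (fun r => (R + 0 * r) * (S.wr r t * S.wt r t)) (Ioi R) := by
    refine fun t => S.dom_slice (C := R) t measurableSet_Ioi hs (ContinuousOn.mul (by fun_prop)
      ((slice_r S.cr t).mul (slice_r S.ct t))) fun r hr => ?_
    rw [abs_mul, zero_mul, add_zero, abs_of_pos hR]
    exact mul_le_mul le_rfl (S.sq_terms_le_N (hs hr) t).2.2.2.2.1 (abs_nonneg _) hR.le
  have iD : IntegrableOn (fun r => ∫ t in t₁..t₂, S.D R 0 r t) (Ioi R) := by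
    simp only [intervalIntegral.integral_of_le ht]
    refine (S.dom_prod hp hμ (C := 1 + 2 * |μ| + γ) t₁ t₂ measurableSet_Ioi hs (S.cD hp R 0)
      fun r hr t => S.abs_D_le hp hγ (hs hr) (by simp) ?_ ?_ t).integral_prod_left
    · linarith
    · have : R < r := hr
      linarith
  have iL : IntegrableOn (fun r => R * ∫ t in t₁..t₂, S.L r t) (Ioi R) := by
    simp only [intervalIntegral.integral_of_le ht]
    exact ((S.dom_prod hp hμ (C := 1 + |μ|) t₁ t₂ measurableSet_Ioi hs (S.cL hp)
      fun r hr t => S.abs_L_le hp (hs hr) t).integral_prod_left).const_mul R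
  have lim : Tendsto (fun b => R * ∫ t in t₁..t₂, S.L b t) atTop
      (𝓝 ((∫ r in Ioi R, ((R + 0 * r) * (S.wr r t₂ * S.wt r t₂)
        - (R + 0 * r) * (S.wr r t₁ * S.wt r t₁))) + R * (∫ t in t₁..t₂, S.L R t)
        + ∫ r in Ioi R, ∫ t in t₁..t₂, S.D R 0 r t)) := by
    refine (((intervalIntegral_tendsto_integral_Ioi R ((iP t₂).sub (iP t₁)) tendsto_id).add
      tendsto_const_nhds).add (intervalIntegral_tendsto_integral_Ioi R iD tendsto_id)).congr' ?_
    filter_upwards [Ioi_mem_atTop R] with b hb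
    have := S.rect_morawetz hp R 0 hR (le_of_lt hb) ht
    simp only [zero_mul, add_zero, intervalIntegral.integral_const_mul] at this
    simp only [Pi.sub_apply, zero_mul, add_zero, id]
    linarith
  -- `max R 1 ≤ r` absorbs the missing factor `r` in the boundary estimate
  have hR1 : 0 < max R 1 := lt_max_of_lt_left hR
  have := limit_zero_at_top hR1 (iL.mono_set (Ioi_subset_Ioi (le_max_left _ _))) (fun r hr => by
    have : 1 ≤ r := (le_max_right R 1).trans (le_of_lt hr)
    exact le_mul_of_one_le_left (abs_nonneg _) this) lim
  linarith

/-! ### The energy distribution estimate on the half line -/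

/-- The virial quantity `∫ φ w_r w_t` with `φ(r) = min r R`. -/
def J (R t : ℝ) : ℝ :=
  (∫ r in Ioc 0 R, (0 + 1 * r) * (S.wr r t * S.wt r t))
    + ∫ r in Ioi R, (R + 0 * r) * (S.wr r t * S.wt r t)

/-- The weighted Hardy inequality keeps the virial quantity below `R E` even though the potential
energy may be negative inside the ball. -/
lemma abs_J_le (hp : 1 < p) (hμ : -1 / 4 < μ) {R : ℝ} (hR : 0 < R) (t : ℝ) :
    |S.J R t| ≤ R * E - R * μ / 2 * ∫ r in Ioi R, S.w r t ^ 2 / r ^ 2 := by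
  have hs : Ioi R ⊆ Ioi 0 := Ioi_subset_Ioi hR.le
  have hs' : Ioc 0 R ⊆ Ioi 0 := Ioc_subset_Ioi_self
  have c1 : ContinuousOn (fun r => S.w r t ^ 2 / r ^ 2) (Ioi 0) :=
    slice_r (f := fun r t => S.w r t ^ 2 / r ^ 2) S.c2 t
  have iH : IntegrableOn (fun r => (R ^ 2 - r ^ 2) * S.wr r t ^ 2
      - (R ^ 2 / 4) * (S.w r t ^ 2 / r ^ 2)) (Ioc 0 R) := by
    refine IntegrableOn.sub ?_ (((S.i0 t).mono_set hs').const_mul _)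
    refine S.dom_slice (C := R ^ 2) t measurableSet_Ioc hs'
      (ContinuousOn.mul (by fun_prop) ((slice_r S.cr t).pow 2)) fun r hr => ?_
    have hr0 : 0 < r := hr.1
    have hrR : r ^ 2 ≤ R ^ 2 := pow_le_pow_left₀ hr0.le hr.2 2
    rw [abs_mul, abs_of_nonneg (by linarith), abs_of_nonneg (sq_nonneg _)]
    exact mul_le_mul (by nlinarith) (S.sq_terms_le_N hr0 t).1 (sq_nonneg _) (sq_nonneg _)
  have b1 : |∫ r in Ioc 0 R, (0 + 1 * r) * (S.wr r t * S.wt r t)|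
      ≤ R * ∫ r in Ioc 0 R, S.e r t := by
    have h1 : ‖∫ r in Ioc 0 R, (0 + 1 * r) * (S.wr r t * S.wt r t)‖ ≤
        ∫ r in Ioc 0 R, (R * S.e r t - 1 / (2 * R) * ((R ^ 2 - r ^ 2) * S.wr r t ^ 2
          - (R ^ 2 / 4) * (S.w r t ^ 2 / r ^ 2))) := by
      refine norm_integral_le_of_norm_le
        ((((S.ie t).mono_set hs').const_mul R).sub (iH.const_mul _)) ?_
      refine (ae_restrict_iff' measurableSet_Ioc).2 (ae_of_all _ fun r hr => ?_)
      have hr0 : 0 < r := hr.1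
      have hF := (S.F_div_le hp hr0 t).1
      have hz : 0 ≤ S.w r t ^ 2 / r ^ 2 := by positivity
      have e1 : R * S.e r t - 1 / (2 * R) * ((R ^ 2 - r ^ 2) * S.wr r t ^ 2
          - (R ^ 2 / 4) * (S.w r t ^ 2 / r ^ 2)) = ((r * S.wr r t) ^ 2 + (R * S.wt r t) ^ 2) / 2 / R
          + R * ((μ + 1 / 4) / 2 * (S.w r t ^ 2 / r ^ 2)) + R * (1 / (p + 1) * S.F r t) := by
        unfold e
        generalize 1 / (p + 1) * S.F r t = x
        generalize S.w r t ^ 2 / r ^ 2 = y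
        field_simp
        ring
      have e2 := abs_mul_le_sq (r * S.wr r t) (R * S.wt r t)
      have e3 : |(0 + 1 * r) * (S.wr r t * S.wt r t)| = |r * S.wr r t * (R * S.wt r t)| / R := by
        rw [zero_add, one_mul, show r * S.wr r t * (R * S.wt r t)
          = r * (S.wr r t * S.wt r t) * R by ring, abs_mul _ R, abs_of_pos hR]
        field_simp
      rw [Real.norm_eq_abs, e1, e3]
      have e4 := div_le_div_of_nonneg_right e2 hR.le
      have e5 : 0 ≤ R * ((μ + 1 / 4) / 2 * (S.w r t ^ 2 / r ^ 2)) := by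
        have : 0 ≤ (μ + 1 / 4) / 2 := by linarith
        positivity
      have e6 : 0 ≤ R * (1 / (p + 1) * S.F r t) := by positivity
      linarith
    rw [integral_sub (((S.ie t).mono_set hs').const_mul R) (iH.const_mul _), integral_const_mul,
      integral_const_mul] at h1
    have h2 : 0 ≤ 1 / (2 * R) * ∫ r in Ioc 0 R, ((R ^ 2 - r ^ 2) * S.wr r t ^ 2
          - (R ^ 2 / 4) * (S.w r t ^ 2 / r ^ 2)) :=
      mul_nonneg (by positivity) (S.hardy_weighted hR t)
    rw [Real.norm_eq_abs] at h1
    linarith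
  have b2 : |∫ r in Ioi R, (R + 0 * r) * (S.wr r t * S.wt r t)|
      ≤ R * (∫ r in Ioi R, S.e r t) - R * μ / 2 * ∫ r in Ioi R, S.w r t ^ 2 / r ^ 2 := by
    have h1 : ‖∫ r in Ioi R, (R + 0 * r) * (S.wr r t * S.wt r t)‖ ≤
        ∫ r in Ioi R, (R * S.e r t - R * μ / 2 * (S.w r t ^ 2 / r ^ 2)) := by
      refine norm_integral_le_of_norm_le
        ((((S.ie t).mono_set hs).const_mul R).sub (((S.i0 t).mono_set hs).const_mul _)) ?_
      refine (ae_restrict_iff' measurableSet_Ioi).2 (ae_of_all _ fun r hr => ?_)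
      have hF := (S.F_div_le hp (hs hr) t).1
      have e2 := mul_le_mul_of_nonneg_left (abs_mul_le_sq (S.wr r t) (S.wt r t)) hR.le
      rw [Real.norm_eq_abs, zero_mul, add_zero, abs_mul, abs_of_pos hR]
      have e6 : 0 ≤ R * (1 / (p + 1) * S.F r t) := by positivity
      unfold e
      linarith
    rwa [integral_sub (((S.ie t).mono_set hs).const_mul R) (((S.i0 t).mono_set hs).const_mul _),
      integral_const_mul, integral_const_mul] at h1
  have hE := setIntegral_split hR (S.ie t)
  rw [S.e_integral t] at hE
  have h3 := abs_add_le (∫ r in Ioc 0 R, (0 + 1 * r) * (S.wr r t * S.wt r t))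
    (∫ r in Ioi R, (R + 0 * r) * (S.wr r t * S.wt r t))
  have hE' := congrArg (R * ·) hE
  simp only [mul_add] at hE'
  unfold J
  linarith

lemma intervalIntegrable_inner (hp : 1 < p) (hμ : -1 / 4 < μ) (R : ℝ) {t₁ t₂ : ℝ}
    (ht : t₁ ≤ t₂) :
    IntervalIntegrable (fun t => ∫ r in Ioc 0 R, S.e r t) volume t₁ t₂ :=
  (intervalIntegrable_iff_integrableOn_Ioc_of_le ht).2
    (S.dom_prod hp hμ (C := 1 + |μ|) t₁ t₂ measurableSet_Ioc Ioc_subset_Ioi_self (S.ce hp)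
      fun _ hr t => S.abs_e_le hp hr.1 t).integral_prod_right

lemma outer_eq {R : ℝ} (hR : 0 < R) (t : ℝ) :
    ∫ r in Ioi R, S.e r t = E - ∫ r in Ioc 0 R, S.e r t := by
  have hE := setIntegral_split hR (S.ie t)
  rw [S.e_integral t] at hE
  linarith

lemma intervalIntegrable_outer (hp : 1 < p) (hμ : -1 / 4 < μ) {R : ℝ} (hR : 0 < R) {t₁ t₂ : ℝ}
    (ht : t₁ ≤ t₂) :
    IntervalIntegrable (fun t => ∫ r in Ioi R, S.e r t) volume t₁ t₂ := by
  simp only [S.outer_eq hR]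
  exact intervalIntegrable_const.sub (S.intervalIntegrable_inner hp hμ R ht)

/-- The energy distribution estimate on the half line. The Morawetz identity on `[-R, T]` bounds
the energy inside `r < R` by `2 R E = ∫_{-R}^R E`, and the part of this over `r < R` cancels. -/
theorem energy_distribution (hp : 1 < p) (hμ : -1 / 4 < μ) (hγ : 2 ≤ γ) {R T : ℝ} (hR : 0 < R)
    (hRT : R < T) :
    ∫ t in R..T, ∫ r in Ioc 0 R, S.e r t ≤
      (∫ t in (-R)..R, ∫ r in Ioi R, S.e r t)
      - R * μ * ((∫ t in (-R)..T, ∫ r in Ioi R, S.w r t ^ 2 / r ^ 2 / r)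
        + 1 / 2 * ((∫ r in Ioi R, S.w r (-R) ^ 2 / r ^ 2)
          + ∫ r in Ioi R, S.w r T ^ 2 / r ^ 2)) := by
  have ht : -R ≤ T := by linarith
  have hs : Ioi R ⊆ Ioi 0 := Ioi_subset_Ioi hR.le
  have hs' : Ioc 0 R ⊆ Ioi 0 := Ioc_subset_Ioi_self
  have iP₁ : ∀ t, IntegrableOn (fun r => (0 + 1 * r) * (S.wr r t * S.wt r t)) (Ioc 0 R) := by
    refine fun t => S.dom_slice (C := R) t measurableSet_Ioc hs' (ContinuousOn.mul (by fun_prop)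
      ((slice_r S.cr t).mul (slice_r S.ct t))) fun r hr => ?_
    have hr0 : 0 < r := hr.1
    rw [abs_mul, zero_add, one_mul, abs_of_pos hr0]
    exact mul_le_mul hr.2 (S.sq_terms_le_N hr0 t).2.2.2.2.1 (abs_nonneg _) hR.le
  have iP₂ : ∀ t, IntegrableOn (fun r => (R + 0 * r) * (S.wr r t * S.wt r t)) (Ioi R) := by
    refine fun t => S.dom_slice (C := R) t measurableSet_Ioi hs (ContinuousOn.mul (by fun_prop)
      ((slice_r S.cr t).mul (slice_r S.ct t))) fun r hr => ?_
    rw [abs_mul, zero_mul, add_zero, abs_of_pos hR]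
    exact mul_le_mul le_rfl (S.sq_terms_le_N (hs hr) t).2.2.2.2.1 (abs_nonneg _) hR.le
  have iD₁ := S.dom_prod hp hμ (C := 1 + 2 * |μ| + γ) (-R) T measurableSet_Ioc hs' (S.cD hp 0 1)
      fun r hr t => S.abs_D_le hp hγ hr.1 (by simp) (by have := hr.1; linarith) (by linarith) t
  have iD₂ := S.dom_prod hp hμ (C := 1 + 2 * |μ| + γ) (-R) T measurableSet_Ioi hs (S.cD hp R 0)
      fun r hr t => S.abs_D_le hp hγ (hs hr) (by simp) (by linarith)
        (by have : R < r := hr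
            linarith) t
  have i3 := S.dom_prod hp hμ (f := fun r t => S.w r t ^ 2 / r ^ 2 / r) (C := 1 / R) (-R) T
      measurableSet_Ioi hs S.c3 fun r hr t => by
        have hr0 : 0 < r := hs hr
        rw [abs_of_nonneg (by positivity), div_eq_mul_one_div, mul_comm]
        exact mul_le_mul (one_div_le_one_div_of_le hR (le_of_lt hr)) (S.sq_terms_le_N hr0 t).2.1
          (by positivity) (by positivity)
  have m1 := S.morawetz_inner hp hμ hγ hR ht
  have m2 := S.morawetz_outer hp hμ hγ hR ht
  rw [integral_sub (iP₁ T) (iP₁ (-R))] at m1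
  rw [integral_sub (iP₂ T) (iP₂ (-R))] at m2
  have hJ : S.J R T - S.J R (-R) = - (∫ r in Ioc 0 R, ∫ t in (-R)..T, S.D 0 1 r t)
      - ∫ r in Ioi R, ∫ t in (-R)..T, S.D R 0 r t := by
    unfold J; linarith
  have s1 : ∫ r in Ioc 0 R, ∫ t in (-R)..T, S.D 0 1 r t
      = ∫ t in (-R)..T, ∫ r in Ioc 0 R, S.D 0 1 r t := by
    simp only [intervalIntegral.integral_of_le ht]
    exact integral_integral_swap iD₁
  have s2 : ∫ r in Ioi R, ∫ t in (-R)..T, S.D R 0 r t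
      = ∫ t in (-R)..T, ∫ r in Ioi R, S.D R 0 r t := by
    simp only [intervalIntegral.integral_of_le ht]
    exact integral_integral_swap iD₂
  have l1 : ∫ t in (-R)..T, ∫ r in Ioc 0 R, S.e r t
      ≤ ∫ t in (-R)..T, ∫ r in Ioc 0 R, S.D 0 1 r t := by
    refine intervalIntegral.integral_mono_on ht (S.intervalIntegrable_inner hp hμ R ht)
      ((intervalIntegrable_iff_integrableOn_Ioc_of_le ht).2 iD₁.integral_prod_right)
      fun t _ => ?_
    refine setIntegral_mono_on ((S.ie t).mono_set hs') (S.dom_slice (C := 1 + 2 * |μ| + γ) t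
      measurableSet_Ioc hs' (slice_r (S.cD hp 0 1) t) fun r hr => S.abs_D_le hp hγ hr.1 (by simp)
        (by have := hr.1; linarith) (by linarith) t) measurableSet_Ioc fun r hr => ?_
    have hr0 : 0 < r := hr.1
    have hF := (S.F_div_le hp hr0 t).1
    have e1 : S.D 0 1 r t = S.L r t + (μ * (S.w r t ^ 2 / r ^ 2)
      + γ * (1 / (p + 1) * S.F r t)) := by
      unfold D; field_simp; ring
    rw [e1]
    unfold L e
    nlinarith
  have l2 : R * μ * (∫ t in (-R)..T, ∫ r in Ioi R, S.w r t ^ 2 / r ^ 2 / r)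
      ≤ ∫ t in (-R)..T, ∫ r in Ioi R, S.D R 0 r t := by
    rw [← intervalIntegral.integral_const_mul]
    refine intervalIntegral.integral_mono_on ht
      ((intervalIntegrable_iff_integrableOn_Ioc_of_le ht).2
        (i3.integral_prod_right.const_mul (R * μ)))
      ((intervalIntegrable_iff_integrableOn_Ioc_of_le ht).2 iD₂.integral_prod_right)
      fun t _ => ?_
    rw [← integral_const_mul]
    refine setIntegral_mono_on (Integrable.const_mul (S.dom_slice (C := 1 / R) t measurableSet_Ioi
      hs (slice_r (f := fun r t => S.w r t ^ 2 / r ^ 2 / r) S.c3 t) fun r hr => ?_) _)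
      (S.dom_slice (C := 1 + 2 * |μ| + γ) t
      measurableSet_Ioi hs (slice_r (S.cD hp R 0) t) fun r hr => S.abs_D_le hp hγ (hs hr) (by simp)
        (by linarith) (by have : R < r := hr
                          linarith) t) measurableSet_Ioi fun r hr => ?_
    · have hr0 : 0 < r := hs hr
      rw [abs_of_nonneg (by positivity), div_eq_mul_one_div, mul_comm]
      exact mul_le_mul (one_div_le_one_div_of_le hR (le_of_lt hr)) (S.sq_terms_le_N hr0 t).2.1
          (by positivity) (by positivity)
    · have hr0 : 0 < r := hs hr
      have hF := S.F_nonneg hr0 t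
      have : 0 ≤ R * (γ / (p + 1) * (S.F r t / r)) := by
        have : 0 < p + 1 := by linarith
        positivity
      unfold D
      linarith
  have j1 := (abs_le.1 (S.abs_J_le hp hμ hR T)).1
  have j2 := (abs_le.1 (S.abs_J_le hp hμ hR (-R))).2
  have k1 : ∫ t in (-R)..T, ∫ r in Ioc 0 R, S.e r t
      = (∫ t in (-R)..R, ∫ r in Ioc 0 R, S.e r t) + ∫ t in R..T, ∫ r in Ioc 0 R, S.e r t :=
    (intervalIntegral.integral_add_adjacent_intervals (S.intervalIntegrable_inner hp hμ R (by linarith))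
      (S.intervalIntegrable_inner hp hμ R hRT.le)).symm
  have k2 : ∫ t in (-R)..R, ∫ r in Ioi R, S.e r t
      = 2 * R * E - ∫ t in (-R)..R, ∫ r in Ioc 0 R, S.e r t := by
    simp only [S.outer_eq hR]
    rw [intervalIntegral.integral_sub (by simp) (S.intervalIntegrable_inner hp hμ R (by linarith)),
      intervalIntegral.integral_const, smul_eq_mul]
    ring
  rw [s1, s2] at hJ
  linarith

end Wave

/-! ### Jets of twice differentiable functions on the half plane -/

section Planar

variable {V G : ℝ × ℝ → ℝ}

lemma isOpen_halfPlane : IsOpen (Ioi (0 : ℝ) ×ˢ (univ : Set ℝ)) := isOpen_Ioi.prod isOpen_univ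

lemma contDiffOn_fderiv_apply (hV : ContDiffOn ℝ 2 V (Ioi 0 ×ˢ univ)) (z : ℝ × ℝ) :
    ContDiffOn ℝ 1 (fun q => fderiv ℝ V q z) (Ioi 0 ×ˢ univ) :=
  (hV.fderiv_of_isOpen isOpen_halfPlane (m := 1) (by norm_num)).clm_apply contDiffOn_const

lemma continuousOn_fderiv_apply (hG : ContDiffOn ℝ 1 G (Ioi 0 ×ˢ univ)) (z : ℝ × ℝ) :
    ContinuousOn (fun q => fderiv ℝ G q z) (Ioi 0 ×ˢ univ) :=
  (hG.continuousOn_fderiv_of_isOpen isOpen_halfPlane le_rfl).clm_apply continuousOn_const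

lemma hasFDerivAt_halfPlane (hG : ContDiffOn ℝ 1 G (Ioi 0 ×ˢ univ)) {r : ℝ} (hr : 0 < r) (t : ℝ) :
    HasFDerivAt G (fderiv ℝ G (r, t)) (r, t) :=
  ((hG.differentiableOn (by norm_num)).differentiableAt
    (isOpen_halfPlane.mem_nhds (mk_mem_prod hr (mem_univ t)))).hasFDerivAt

lemma hasDerivAt_left (hG : ContDiffOn ℝ 1 G (Ioi 0 ×ˢ univ)) {r : ℝ} (hr : 0 < r) (t : ℝ) :
    HasDerivAt (fun s => G (s, t)) (fderiv ℝ G (r, t) (1, 0)) r :=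
  (hasFDerivAt_halfPlane hG hr t).comp_hasDerivAt (f := fun s => (s, t)) r
    ((hasDerivAt_id' r).prodMk (hasDerivAt_const r t))

lemma hasDerivAt_right (hG : ContDiffOn ℝ 1 G (Ioi 0 ×ˢ univ)) {r : ℝ} (hr : 0 < r) (t : ℝ) :
    HasDerivAt (fun s => G (r, s)) (fderiv ℝ G (r, t) (0, 1)) t :=
  (hasFDerivAt_halfPlane hG hr t).comp_hasDerivAt (f := fun s => (r, s)) t
    ((hasDerivAt_const t r).prodMk (hasDerivAt_id' t))

lemma fderiv_fderiv_comm (hV : ContDiffOn ℝ 2 V (Ioi 0 ×ˢ univ)) {r : ℝ} (hr : 0 < r) (t : ℝ)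
    (y z : ℝ × ℝ) :
    fderiv ℝ (fun q => fderiv ℝ V q y) (r, t) z = fderiv ℝ (fun q => fderiv ℝ V q z) (r, t) y := by
  have hm := isOpen_halfPlane.mem_nhds (show (r, t) ∈ Ioi (0 : ℝ) ×ˢ univ from ⟨hr, mem_univ t⟩)
  have hs : IsSymmSndFDerivAt ℝ V (r, t) := (hV.contDiffAt hm).isSymmSndFDerivAt (by simp)
  have hd : DifferentiableAt ℝ (fderiv ℝ V) (r, t) :=
    ((hV.fderiv_of_isOpen isOpen_halfPlane (m := 1) (by norm_num)).differentiableOn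
      (by norm_num)).differentiableAt hm
  have key : ∀ w : ℝ × ℝ, fderiv ℝ (fun q => fderiv ℝ V q w) (r, t)
      = (fderiv ℝ (fderiv ℝ V) (r, t)).flip w := fun w => by
    rw [fderiv_clm_apply hd (differentiableAt_const w)]
    simp
  rw [key, key]
  exact hs.eq z y

/-- The partial derivatives up to order two of a `C²` function on `(0, ∞) × ℝ`. -/
def jetOf (hV : ContDiffOn ℝ 2 V (Ioi 0 ×ˢ univ)) : Jet where
  w r t := V (r, t)
  wr r t := fderiv ℝ V (r, t) (1, 0)
  wt r t := fderiv ℝ V (r, t) (0, 1)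
  wrr r t := fderiv ℝ (fun q => fderiv ℝ V q (1, 0)) (r, t) (1, 0)
  wrt r t := fderiv ℝ (fun q => fderiv ℝ V q (0, 1)) (r, t) (1, 0)
  wtt r t := fderiv ℝ (fun q => fderiv ℝ V q (0, 1)) (r, t) (0, 1)
  hr _ t h := hasDerivAt_left (hV.of_le (by norm_num)) h t
  ht _ t h := hasDerivAt_right (hV.of_le (by norm_num)) h t
  hrr _ t h := hasDerivAt_left (contDiffOn_fderiv_apply hV (1, 0)) h t
  hrt _ t h := hasDerivAt_left (contDiffOn_fderiv_apply hV (0, 1)) h t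
  htr r t h := by
    rw [← fderiv_fderiv_comm hV h]
    exact hasDerivAt_right (contDiffOn_fderiv_apply hV (1, 0)) h t
  htt _ t h := hasDerivAt_right (contDiffOn_fderiv_apply hV (0, 1)) h t
  c := hV.continuousOn
  cr := continuousOn_fderiv_apply (hV.of_le (by norm_num)) _
  ct := continuousOn_fderiv_apply (hV.of_le (by norm_num)) _
  crr := continuousOn_fderiv_apply (contDiffOn_fderiv_apply hV (1, 0)) _
  crt := continuousOn_fderiv_apply (contDiffOn_fderiv_apply hV (0, 1)) _
  ctt := continuousOn_fderiv_apply (contDiffOn_fderiv_apply hV (0, 1)) _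

end Planar

/-- The jet of `r^m v`, given the jet of `v`. -/
def Jet.scale (J : Jet) (m : ℝ) : Jet where
  w r t := r ^ m * J.w r t
  wr r t := r ^ m * (J.wr r t + m * J.w r t / r)
  wt r t := r ^ m * J.wt r t
  wrr r t := r ^ m * (J.wrr r t + 2 * m * J.wr r t / r + m * (m - 1) * J.w r t / r ^ 2)
  wrt r t := r ^ m * (J.wrt r t + m * J.wt r t / r)
  wtt r t := r ^ m * J.wtt r t
  hr r t h := by
    refine ((hasDerivAt_rpow_const (p := m) (Or.inl h.ne')).fun_mul (J.hr r t h)).congr_deriv ?_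
    rw [rpow_sub_one h.ne']; field_simp; ring
  ht r t h := (J.ht r t h).const_mul _
  hrr r t h := by
    refine ((hasDerivAt_rpow_const (p := m) (Or.inl h.ne')).fun_mul ((J.hrr r t h).fun_add
      (((J.hr r t h).const_mul m).fun_div (hasDerivAt_id' r) h.ne'))).congr_deriv ?_
    rw [rpow_sub_one h.ne']; field_simp; ring
  hrt r t h := by
    refine ((hasDerivAt_rpow_const (p := m) (Or.inl h.ne')).fun_mul (J.hrt r t h)).congr_deriv ?_
    rw [rpow_sub_one h.ne']; field_simp; ring
  htr r t h := ((J.htr r t h).fun_add (((J.ht r t h).const_mul m).div_const r)).const_mul _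
  htt r t h := (J.htt r t h).const_mul _
  c := (continuousOn_fst.rpow_const fun q hq => Or.inl (ne_of_gt hq.1)).mul J.c
  cr := (continuousOn_fst.rpow_const fun q hq => Or.inl (ne_of_gt hq.1)).mul
    (J.cr.add ((continuousOn_const.mul J.c).div continuousOn_fst fun q hq => ne_of_gt hq.1))
  ct := (continuousOn_fst.rpow_const fun q hq => Or.inl (ne_of_gt hq.1)).mul J.ct
  crr := (continuousOn_fst.rpow_const fun q hq => Or.inl (ne_of_gt hq.1)).mul
    ((J.crr.add ((continuousOn_const.mul J.cr).div continuousOn_fst fun q hq => ne_of_gt hq.1)).add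
      ((continuousOn_const.mul J.c).div (continuousOn_fst.pow 2)
        fun q hq => pow_ne_zero 2 (ne_of_gt hq.1)))
  crt := (continuousOn_fst.rpow_const fun q hq => Or.inl (ne_of_gt hq.1)).mul
    (J.crt.add ((continuousOn_const.mul J.ct).div continuousOn_fst fun q hq => ne_of_gt hq.1))
  ctt := (continuousOn_fst.rpow_const fun q hq => Or.inl (ne_of_gt hq.1)).mul J.ctt

/-! ### Calculus of radial functions -/

section Radial

variable {d : ℕ} {g g₁ : ℝ → ℝ} {g' g₂ : ℝ} {x : EuclideanSpace ℝ (Fin d)}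

lemma hasFDerivAt_radial (hx : x ≠ 0) (hg : HasDerivAt g g' ‖x‖) :
    HasFDerivAt (fun y : EuclideanSpace ℝ (Fin d) => g ‖y‖) ((g' / ‖x‖) • innerSL ℝ x) x := by
  have hx' : 0 < ‖x‖ := norm_pos_iff.2 hx
  have h1 := ((hasStrictFDerivAt_norm_sq x).hasFDerivAt).sqrt (by positivity)
  simp only [sqrt_sq (norm_nonneg _)] at h1
  refine (hg.comp_hasFDerivAt x h1).congr_fderiv ?_
  ext y
  simp
  field_simp

lemma norm_gradient_radial_sq (hx : x ≠ 0) (hg : HasDerivAt g g' ‖x‖) :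
    ‖gradient (fun y : EuclideanSpace ℝ (Fin d) => g ‖y‖) x‖ ^ 2 = g' ^ 2 := by
  have hx' : 0 < ‖x‖ := norm_pos_iff.2 hx
  unfold gradient
  rw [LinearIsometryEquiv.norm_map, (hasFDerivAt_radial hx hg).fderiv, norm_smul,
    innerSL_apply_norm, norm_div, norm_norm, div_mul_cancel₀ _ hx'.ne', norm_eq_abs, sq_abs]

/-- The Laplacian of a radial function is `g'' + (d - 1) g' / r`. -/
lemma lap_radial (hx : x ≠ 0) (hg : ∀ r, 0 < r → HasDerivAt g (g₁ r) r)
    (hg₁ : HasDerivAt g₁ g₂ ‖x‖) :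
    lap (fun y : EuclideanSpace ℝ (Fin d) => g ‖y‖) x = g₂ + ((d : ℝ) - 1) * g₁ ‖x‖ / ‖x‖ := by
  have hx' : 0 < ‖x‖ := norm_pos_iff.2 hx
  have hk : HasDerivAt (fun s => g₁ s / s) ((g₂ * ‖x‖ - g₁ ‖x‖ * 1) / ‖x‖ ^ 2) ‖x‖ :=
    hg₁.fun_div (hasDerivAt_id' _) hx'.ne'
  have hpart : ∀ i : Fin d, fderiv ℝ (fun y => fderiv ℝ
      (fun y : EuclideanSpace ℝ (Fin d) => g ‖y‖) y (EuclideanSpace.single i 1)) x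
      (EuclideanSpace.single i 1)
      = g₁ ‖x‖ / ‖x‖ + (g₂ * ‖x‖ - g₁ ‖x‖) / ‖x‖ ^ 3 * x i ^ 2 := fun i => by
    have hev : (fun y => fderiv ℝ (fun y : EuclideanSpace ℝ (Fin d) => g ‖y‖) y
        (EuclideanSpace.single i 1)) =ᶠ[𝓝 x] fun y => g₁ ‖y‖ / ‖y‖ * y i := by
      filter_upwards [isOpen_ne.mem_nhds hx] with y hy
      rw [(hasFDerivAt_radial hy (hg _ (norm_pos_iff.2 hy))).fderiv]
      simp [EuclideanSpace.inner_single_right]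
    rw [hev.fderiv_eq]
    have hp : HasFDerivAt (fun y : EuclideanSpace ℝ (Fin d) => y i)
        (EuclideanSpace.proj (𝕜 := ℝ) i) x := (EuclideanSpace.proj (𝕜 := ℝ) i).hasFDerivAt
    rw [((hasFDerivAt_radial hx hk).fun_mul hp).fderiv]
    simp [EuclideanSpace.inner_single_right]
    field_simp
  unfold lap
  rw [Finset.sum_congr rfl fun i _ => hpart i, Finset.sum_add_distrib, ← Finset.mul_sum,
    ← EuclideanSpace.real_norm_sq_eq x]
  simp
  field_simp
  ring

variable (d) in
/-- Integration in polar coordinates over the set `‖x‖ ∈ s`. The integrand need only be radial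
away from the origin. -/
lemma setIntegral_radial [NeZero d] {A : Set (EuclideanSpace ℝ (Fin d))} {s : Set ℝ}
    (hs : MeasurableSet s)
    (hA : A = {x : EuclideanSpace ℝ (Fin d) | ‖x‖ ∈ s})
    {f : EuclideanSpace ℝ (Fin d) → ℝ} {φ : ℝ → ℝ}
    (h : ∀ x, x ≠ 0 → f x = φ ‖x‖) :
    ∫ x in A, f x = d * volume.real (ball (0 : EuclideanSpace ℝ (Fin d)) 1) *
      ∫ r in Ioi 0 ∩ s, r ^ (d - 1) * φ r := by
  have hAm : MeasurableSet A := by rw [hA]; exact measurable_norm hs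
  have hae : ∀ᵐ x : EuclideanSpace ℝ (Fin d), x ≠ 0 := by
    have : Nonempty (Fin d) := ⟨0⟩
    simp [ae_iff]
  have h1 : ∫ x in A, f x = ∫ x : EuclideanSpace ℝ (Fin d), (s.indicator φ) ‖x‖ := by
    rw [← integral_indicator hAm]
    refine integral_congr_ae (hae.mono fun x hx => ?_)
    by_cases hxs : ‖x‖ ∈ s
    · simp [hA, hxs, h x hx]
    · simp [hA, hxs]
  have : Nonempty (Fin d) := ⟨0⟩
  rw [h1, integral_fun_norm_addHaar volume, ← setIntegral_indicator hs]
  simp only [finrank_euclideanSpace, Fintype.card_fin, nsmul_eq_mul, smul_eq_mul, mul_assoc]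
  congr 2
  refine setIntegral_congr_fun measurableSet_Ioi fun r _ => ?_
  by_cases hr : r ∈ s <;> simp [hr]

variable (d) in
lemma integrable_radial [NeZero d] {f : EuclideanSpace ℝ (Fin d) → ℝ} {φ : ℝ → ℝ}
    (h : ∀ x, x ≠ 0 → f x = φ ‖x‖) (hf : Integrable f) :
    IntegrableOn (fun r => r ^ (d - 1) * φ r) (Ioi 0) := by
  have : Nonempty (Fin d) := ⟨0⟩
  have hae : ∀ᵐ x : EuclideanSpace ℝ (Fin d), x ≠ 0 := by simp [ae_iff]
  have := (integrable_fun_norm_addHaar (volume : Measure (EuclideanSpace ℝ (Fin d)))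
    (f := φ)).1 (hf.congr (hae.mono h))
  simpa using this

end Radial

/-! ### Reduction of the radial equation to the half line -/

namespace Sol

variable {d : ℕ} [NeZero d] {a p : ℝ} (S : Sol d a p)

lemma contDiffOn_rad :
    ContDiffOn ℝ 2 (fun q : ℝ × ℝ => S.rad q.1 q.2) (Ioi 0 ×ˢ univ) := by
  have h : ContDiff ℝ 2
      (fun q : ℝ × ℝ => (q.1 • EuclideanSpace.single (0 : Fin d) (1 : ℝ), q.2)) := by fun_prop
  refine (S.smooth.comp h.contDiffOn (s := Ioi 0 ×ˢ univ) fun q hq => ?_).congr fun q hq => ?_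
  · have : q.1 ≠ 0 := ne_of_gt hq.1
    simpa using this
  · have : 0 < q.1 := hq.1
    simp [S.u_eq_rad, norm_smul, abs_of_pos this]

/-- The radial profile of the solution, with its partial derivatives. -/
def profile : Jet := jetOf S.contDiffOn_rad

lemma u_eq_profile (x : EuclideanSpace ℝ (Fin d)) (t : ℝ) : S.u x t = S.profile.w ‖x‖ t :=
  S.u_eq_rad x t

lemma u_slice (t : ℝ) : (fun y => S.u y t) = fun y => S.profile.w ‖y‖ t :=
  funext fun y => S.u_eq_profile y t

lemma u_slice' (x : EuclideanSpace ℝ (Fin d)) : S.u x = fun t => S.profile.w ‖x‖ t :=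
  funext fun t => S.u_eq_profile x t

variable {x : EuclideanSpace ℝ (Fin d)}

lemma norm_gradient_sq (hx : x ≠ 0) (t : ℝ) :
    ‖gradient (fun y => S.u y t) x‖ ^ 2 = S.profile.wr ‖x‖ t ^ 2 := by
  rw [u_slice]
  exact norm_gradient_radial_sq (g := fun r => S.profile.w r t) hx
    (S.profile.hr _ t (norm_pos_iff.2 hx))

lemma deriv_u (hx : x ≠ 0) (t : ℝ) : deriv (S.u x) t = S.profile.wt ‖x‖ t := by
  rw [S.u_slice' x]
  exact (S.profile.ht _ t (norm_pos_iff.2 hx)).deriv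

lemma deriv_deriv_u (hx : x ≠ 0) (t : ℝ) :
    deriv (deriv (S.u x)) t = S.profile.wtt ‖x‖ t := by
  rw [show deriv (S.u x) = fun t => S.profile.wt ‖x‖ t from funext fun t => S.deriv_u hx t]
  exact (S.profile.htt _ t (norm_pos_iff.2 hx)).deriv

lemma profile_pde {r : ℝ} (hr : 0 < r) (t : ℝ) :
    S.profile.wtt r t - (S.profile.wrr r t + ((d : ℝ) - 1) * S.profile.wr r t / r)
      + a * S.profile.w r t / r ^ 2
      = -(|S.profile.w r t| ^ (p - 1) * S.profile.w r t) := by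
  set x : EuclideanSpace ℝ (Fin d) := r • EuclideanSpace.single (0 : Fin d) (1 : ℝ) with hxd
  have hn : ‖x‖ = r := by simp [hxd, norm_smul, abs_of_pos hr]
  have hx : x ≠ 0 := norm_pos_iff.1 (hn ▸ hr)
  have h := S.pde x t hx
  rw [S.deriv_deriv_u hx, S.u_slice, S.u_eq_profile,
    lap_radial hx (fun s hs => S.profile.hr s t hs) (S.profile.hrr ‖x‖ t (norm_pos_iff.2 hx)),
    hn] at h
  exact h

/-- The exponent `m = (d - 1) / 2` for which `r^m u` solves an equation without first order
term. -/
def _root_.radialExponent (d : ℕ) : ℝ := ((d : ℝ) - 1) / 2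

lemma _root_.rpow_radialExponent_sq {r : ℝ} (hr : 0 < r) :
    (r ^ radialExponent d) ^ 2 = r ^ (d - 1) := by
  have hd : 1 ≤ d := NeZero.one_le
  rw [← rpow_natCast r (d - 1), ← rpow_natCast (r ^ _) 2, ← rpow_mul hr.le, Nat.cast_sub hd]
  congr 1
  simp only [radialExponent]
  push_cast
  ring

/-- The integrand of the finiteness assumption, in polar coordinates. -/
lemma integrable_profile (t : ℝ) : IntegrableOn (fun r => r ^ (d - 1) *
    (S.profile.wr r t ^ 2 + S.profile.w r t ^ 2 / r ^ 2 + S.profile.wt r t ^ 2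
      + |S.profile.w r t| ^ (p + 1))) (Ioi 0) :=
  integrable_radial d (φ := fun r => S.profile.wr r t ^ 2 + S.profile.w r t ^ 2 / r ^ 2
    + S.profile.wt r t ^ 2 + |S.profile.w r t| ^ (p + 1))
    (fun x hx => by rw [S.norm_gradient_sq hx, S.deriv_u hx, S.u_eq_profile]) (S.finite t)

/-- The potential energy density is unchanged by the substitution `w = r^m v`, up to the Jacobian
`(r^m)²`. -/
lemma _root_.rpow_mul_abs_scale {r : ℝ} (hr : 0 < r) (m q v : ℝ) :
    r ^ (-(m * (q - 1))) * |r ^ m * v| ^ (q + 1) = (r ^ m) ^ 2 * |v| ^ (q + 1) := by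
  rw [abs_mul, abs_of_pos (rpow_pos_of_pos hr m), mul_rpow (rpow_nonneg hr.le m) (abs_nonneg v),
    ← mul_assoc, ← rpow_mul hr.le, ← rpow_add hr, ← rpow_natCast, ← rpow_mul hr.le]
  congr 2
  push_cast
  ring

/-- The function `r^((d-1)/2) u`, which solves a wave equation on the half line with the
coefficient `a + (d-1)(d-3)/4` in front of the inverse-square potential. -/
def reduced (hp : 1 < p) : FiniteWave (a + radialExponent d * (radialExponent d - 1))
    (radialExponent d * (p - 1)) p where
  toJet := S.profile.scale (radialExponent d)
  pde r t hr := by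
    have h := S.profile_pde hr t
    have hN : r ^ (-(radialExponent d * (p - 1)))
        * |r ^ radialExponent d * S.profile.w r t| ^ (p - 1) = |S.profile.w r t| ^ (p - 1) := by
      rw [abs_mul, abs_of_pos (rpow_pos_of_pos hr _), mul_rpow (rpow_nonneg hr.le _)
        (abs_nonneg _), ← rpow_mul hr.le, ← mul_assoc, ← rpow_add hr]
      simp
    have hd : (d : ℝ) - 1 = 2 * radialExponent d := by unfold radialExponent; ring
    rw [hd] at h
    simp only [Jet.scale]
    linear_combination (r ^ radialExponent d) * h
      + (r ^ radialExponent d * S.profile.w r t) * hN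
  ir t := by
    refine Integrable.mono' ((S.integrable_profile t).const_mul (2 + 2 * radialExponent d ^ 2))
      (((slice_r (S.profile.scale _).cr t).pow 2).aestronglyMeasurable measurableSet_Ioi)
      ((ae_restrict_iff' measurableSet_Ioi).2 (ae_of_all _ fun r hr => ?_))
    have hr : 0 < r := hr
    have h1 : 0 ≤ S.profile.wt r t ^ 2 + |S.profile.w r t| ^ (p + 1) := by positivity
    rw [norm_of_nonneg (sq_nonneg _)]
    simp only [Jet.scale]
    rw [mul_pow, rpow_radialExponent_sq hr, mul_left_comm]
    refine mul_le_mul_of_nonneg_left ?_ (by positivity)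
    rw [← div_pow]
    rw [mul_div_assoc]
    generalize S.profile.w r t / r = y
    nlinarith [sq_nonneg (S.profile.wr r t - radialExponent d * y), sq_nonneg y,
      mul_nonneg (sq_nonneg (radialExponent d)) h1, sq_nonneg (radialExponent d * S.profile.wr r t)]
  i0 t := by
    refine Integrable.mono' (S.integrable_profile t) ((slice_r (f := fun r t =>
      (S.profile.scale (radialExponent d)).w r t ^ 2 / r ^ 2)
      (((S.profile.scale _).c.pow 2).div (continuousOn_fst.pow 2)
        fun _ hq => pow_ne_zero 2 (ne_of_gt hq.1)) t).aestronglyMeasurable measurableSet_Ioi)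
      ((ae_restrict_iff' measurableSet_Ioi).2 (ae_of_all _ fun r hr => ?_))
    have hr : 0 < r := hr
    have h1 : 0 ≤ S.profile.wt r t ^ 2 + |S.profile.w r t| ^ (p + 1) := by positivity
    rw [norm_of_nonneg (by positivity)]
    simp only [Jet.scale]
    rw [mul_pow, rpow_radialExponent_sq hr, mul_div_assoc]
    refine mul_le_mul_of_nonneg_left ?_ (by positivity)
    linarith [sq_nonneg (S.profile.wr r t)]
  it t := by
    refine Integrable.mono' (S.integrable_profile t)
      (((slice_r (S.profile.scale _).ct t).pow 2).aestronglyMeasurable measurableSet_Ioi)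
      ((ae_restrict_iff' measurableSet_Ioi).2 (ae_of_all _ fun r hr => ?_))
    have hr : 0 < r := hr
    have h1 : 0 ≤ S.profile.wr r t ^ 2 + S.profile.w r t ^ 2 / r ^ 2
      + |S.profile.w r t| ^ (p + 1) := by positivity
    rw [norm_of_nonneg (sq_nonneg _)]
    simp only [Jet.scale]
    rw [mul_pow, rpow_radialExponent_sq hr]
    refine mul_le_mul_of_nonneg_left ?_ (by positivity)
    linarith
  iF t := by
    have hm : ContinuousOn (fun r => r ^ (-(radialExponent d * (p - 1)))
        * |(S.profile.scale (radialExponent d)).w r t| ^ (p + 1)) (Ioi 0) :=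
      (continuousOn_id.rpow_const fun q hq => Or.inl (ne_of_gt hq)).mul
        ((slice_r (S.profile.scale _).c t).abs.rpow_const fun _ _ => Or.inr (by linarith))
    refine Integrable.mono' (S.integrable_profile t) (hm.aestronglyMeasurable measurableSet_Ioi)
      ((ae_restrict_iff' measurableSet_Ioi).2 (ae_of_all _ fun r hr => ?_))
    have hr : 0 < r := hr
    have h1 : 0 ≤ S.profile.wr r t ^ 2 + S.profile.w r t ^ 2 / r ^ 2
      + S.profile.wt r t ^ 2 := by positivity
    rw [norm_of_nonneg (by positivity)]
    simp only [Jet.scale]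
    rw [rpow_mul_abs_scale hr, rpow_radialExponent_sq hr]
    refine mul_le_mul_of_nonneg_left ?_ (by positivity)
    linarith

/-- The energy density of `u` in terms of the radial profile, without the Jacobian. -/
def density (r t : ℝ) : ℝ :=
  (1 : ℝ) / 2 * S.profile.wr r t ^ 2 + a / 2 * S.profile.w r t ^ 2 / r ^ 2
    + 1 / 2 * S.profile.wt r t ^ 2 + 1 / (p + 1) * |S.profile.w r t| ^ (p + 1)

/-- The energy densities of `u` and of `r^((d-1)/2) u` differ by an exact derivative. -/
lemma density_eq (hp : 1 < p) {r : ℝ} (hr : 0 < r) (t : ℝ) :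
    r ^ (d - 1) * S.density r t = (S.reduced hp).e r t - radialExponent d / 2 *
      (2 * ((S.reduced hp).w r t * (S.reduced hp).wr r t / r)
        - (S.reduced hp).w r t ^ 2 / r ^ 2) := by
  simp only [density, FiniteWave.e, FiniteWave.F, reduced, Jet.scale]
  rw [rpow_mul_abs_scale hr, ← rpow_radialExponent_sq hr]
  field_simp
  ring

lemma setIntegral_density (hp : 1 < p) {s : Set ℝ} (hs : MeasurableSet s) (hs0 : s ⊆ Ioi 0)
    (t : ℝ) :
    ∫ r in s, r ^ (d - 1) * S.density r t = (∫ r in s, (S.reduced hp).e r t)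
      - radialExponent d / 2 * ∫ r in s, (2 * ((S.reduced hp).w r t * (S.reduced hp).wr r t / r)
        - (S.reduced hp).w r t ^ 2 / r ^ 2) := by
  rw [← integral_const_mul, ← integral_sub (((S.reduced hp).ie t).mono_set hs0)
    ((((S.reduced hp).int_sq_div t).mono_set hs0).const_mul _)]
  exact setIntegral_congr_fun hs fun r hr => S.density_eq hp (hs0 hr) t

/-- The area of the unit sphere in `ℝ^d`. -/
def _root_.sphereArea (d : ℕ) : ℝ := d * volume.real (ball (0 : EuclideanSpace ℝ (Fin d)) 1)

lemma _root_.sphereArea_pos : 0 < sphereArea d :=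
  mul_pos (by exact_mod_cast NeZero.pos d)
    (ENNReal.toReal_pos (measure_ball_pos _ _ one_pos).ne' measure_ball_lt_top.ne)

/-- The energy density of `u` at `(x, t)`. -/
lemma energy_integrand (hx : x ≠ 0) (t : ℝ) :
    (1:ℝ)/2 * ‖gradient (fun y => S.u y t) x‖ ^ 2 + a / 2 * (S.u x t) ^ 2 / ‖x‖ ^ 2
      + 1/2 * (deriv (S.u x) t) ^ 2 + 1/(p+1) * |S.u x t| ^ (p + 1) = S.density ‖x‖ t := by
  rw [S.norm_gradient_sq hx, S.deriv_u hx, S.u_eq_profile]; rfl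

/-- The reduced function together with the conservation of its energy. -/
def wave (hp : 1 < p) : Wave (a + radialExponent d * (radialExponent d - 1))
    (radialExponent d * (p - 1)) p (S.energy / sphereArea d) where
  toFiniteWave := S.reduced hp
  e_integral t := by
    rw [eq_div_iff (sphereArea_pos (d := d)).ne', S.energy_def t, ← setIntegral_univ (μ := (volume : Measure (EuclideanSpace ℝ (Fin d)))),
      setIntegral_radial d (s := univ) (φ := fun r => S.density r t) MeasurableSet.univ (by simp)
      (fun x hx => S.energy_integrand hx t), inter_univ,
      S.setIntegral_density hp measurableSet_Ioi subset_rfl, (S.reduced hp).integral_sq_div]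
    unfold sphereArea
    ring

/-- The energy of `u` in a ball. -/
lemma integral_ball (hp : 1 < p) {R : ℝ} (hR : 0 < R) (t : ℝ) :
    ∫ x in ball (0 : EuclideanSpace ℝ (Fin d)) R,
      ((1:ℝ)/2 * ‖gradient (fun y => S.u y t) x‖ ^ 2 + a / 2 * (S.u x t) ^ 2 / ‖x‖ ^ 2
        + 1/2 * (deriv (S.u x) t) ^ 2 + 1/(p+1) * |S.u x t| ^ (p + 1))
      = sphereArea d * ((∫ r in Ioc 0 R, (S.wave hp).e r t)
        - radialExponent d / 2 * ((S.wave hp).w R t ^ 2 / R)) := by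
  rw [setIntegral_radial d (s := Iio R) (φ := fun r => S.density r t) measurableSet_Iio
    (by ext; simp) (fun x hx => S.energy_integrand hx t), Ioi_inter_Iio,
    ← integral_Ioc_eq_integral_Ioo, S.setIntegral_density hp measurableSet_Ioc Ioc_subset_Ioi_self,
    (S.reduced hp).integral_sq_div_Ioc hR]
  rfl

/-- The energy of `u` outside a ball. -/
lemma integral_outside (hp : 1 < p) {R : ℝ} (hR : 0 < R) (t : ℝ) :
    ∫ x in {x : EuclideanSpace ℝ (Fin d) | R < ‖x‖},
      ((1:ℝ)/2 * ‖gradient (fun y => S.u y t) x‖ ^ 2 + a / 2 * (S.u x t) ^ 2 / ‖x‖ ^ 2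
        + 1/2 * (deriv (S.u x) t) ^ 2 + 1/(p+1) * |S.u x t| ^ (p + 1))
      = sphereArea d * ((∫ r in Ioi R, (S.wave hp).e r t)
        + radialExponent d / 2 * ((S.wave hp).w R t ^ 2 / R)) := by
  rw [setIntegral_radial d (A := {x | R < ‖x‖}) (s := Ioi R) (φ := fun r => S.density r t) measurableSet_Ioi
    rfl (fun x hx => S.energy_integrand hx t),
    inter_eq_right.2 (Ioi_subset_Ioi hR.le), S.setIntegral_density hp measurableSet_Ioi
    (Ioi_subset_Ioi hR.le), (S.reduced hp).integral_sq_div_Ioi hR, mul_neg, sub_neg_eq_add]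
  rfl

lemma integral_cube (hp : 1 < p) {R : ℝ} (hR : 0 < R) (t : ℝ) :
    ∫ x in {x : EuclideanSpace ℝ (Fin d) | R < ‖x‖}, (S.u x t) ^ 2 / ‖x‖ ^ 3
      = sphereArea d * ∫ r in Ioi R, (S.wave hp).w r t ^ 2 / r ^ 2 / r := by
  rw [setIntegral_radial d (A := {x | R < ‖x‖}) (s := Ioi R) (φ := fun r => S.profile.w r t ^ 2 / r ^ 3)
    measurableSet_Ioi rfl (fun x hx => by rw [S.u_eq_profile]),
    inter_eq_right.2 (Ioi_subset_Ioi hR.le)]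
  refine congrArg _ (setIntegral_congr_fun measurableSet_Ioi fun r hr => ?_)
  have hr0 : 0 < r := hR.trans hr
  simp only [wave, reduced, Jet.scale]
  rw [mul_pow, rpow_radialExponent_sq hr0]
  field_simp

lemma integral_square (hp : 1 < p) {R : ℝ} (hR : 0 < R) (t₁ t₂ : ℝ) :
    ∫ x in {x : EuclideanSpace ℝ (Fin d) | R < ‖x‖},
      ((S.u x t₁) ^ 2 + (S.u x t₂) ^ 2) / ‖x‖ ^ 2
      = sphereArea d * ((∫ r in Ioi R, (S.wave hp).w r t₁ ^ 2 / r ^ 2)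
        + ∫ r in Ioi R, (S.wave hp).w r t₂ ^ 2 / r ^ 2) := by
  rw [setIntegral_radial d (A := {x | R < ‖x‖}) (s := Ioi R)
    (φ := fun r => (S.profile.w r t₁ ^ 2 + S.profile.w r t₂ ^ 2) / r ^ 2)
    measurableSet_Ioi rfl (fun x hx => by rw [S.u_eq_profile, S.u_eq_profile]),
    inter_eq_right.2 (Ioi_subset_Ioi hR.le), ← integral_add
    (((S.wave hp).i0 t₁).mono_set (Ioi_subset_Ioi hR.le))
    (((S.wave hp).i0 t₂).mono_set (Ioi_subset_Ioi hR.le))]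
  refine congrArg _ (setIntegral_congr_fun measurableSet_Ioi fun r hr => ?_)
  have hr0 : 0 < r := hR.trans hr
  simp only [wave, reduced, Jet.scale]
  rw [mul_pow, mul_pow, rpow_radialExponent_sq hr0]
  field_simp

end Sol

/-- **Energy distribution estimate (Corollary 4.5).** Under the assumptions
`3 ≤ d ≤ 6`, `1 + 4/(d−1) ≤ p < 1 + 4/(d−2)`, `a > −(d−2)²/4 + ((d−2)p−d)²/(4p²)` and with
`λ_d = (d−1)(d−3)/4`, every finite-energy radial classical solution `u` of (NLW_a)
satisfies, for all `0 < R < T`, the energy distribution inequality of the paper. -/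
theorem energy_distribution_estimate (d : ℕ) (a p : ℝ) (hd3 : 3 ≤ d) (hd6 : d ≤ 6)
    (hp1 : 1 + 4 / ((d : ℝ) - 1) ≤ p) (hp2 : p < 1 + 4 / ((d : ℝ) - 2))
    (ha : -((d : ℝ) - 2) ^ 2 / 4 + (((d : ℝ) - 2) * p - d) ^ 2 / (4 * p ^ 2) < a)
    (lamd : ℝ) (hlam : lamd = ((d : ℝ) - 1) * ((d : ℝ) - 3) / 4)
    (S : Sol d a p) (R T : ℝ) (hR : 0 < R) (hRT : R < T) :
    (∫ t in R..T, ∫ x in Metric.ball (0 : EuclideanSpace ℝ (Fin d)) R,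
        ((1:ℝ)/2 * ‖gradient (fun y => S.u y t) x‖ ^ 2
          + a / 2 * (S.u x t) ^ 2 / ‖x‖ ^ 2
          + 1/2 * (deriv (S.u x) t) ^ 2 + 1/(p+1) * |S.u x t| ^ (p + 1)))
    ≤ (∫ t in (-R)..R, ∫ x in {x : EuclideanSpace ℝ (Fin d) | R < ‖x‖},
        ((1:ℝ)/2 * ‖gradient (fun y => S.u y t) x‖ ^ 2
          + a / 2 * (S.u x t) ^ 2 / ‖x‖ ^ 2
          + 1/2 * (deriv (S.u x) t) ^ 2 + 1/(p+1) * |S.u x t| ^ (p + 1)))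
      + R * (|a| - lamd) *
        ((∫ t in (-R)..T, ∫ x in {x : EuclideanSpace ℝ (Fin d) | R < ‖x‖},
            (S.u x t) ^ 2 / ‖x‖ ^ 3)
          + 1 / 2 * (∫ x in {x : EuclideanSpace ℝ (Fin d) | R < ‖x‖},
              ((S.u x (-R)) ^ 2 + (S.u x T) ^ 2) / ‖x‖ ^ 2)) := by
  have : NeZero d := ⟨by omega⟩
  have hd : (3 : ℝ) ≤ d := by exact_mod_cast hd3
  have hp : 1 < p := lt_of_lt_of_le (lt_add_of_pos_right 1 (by
    have : 0 < (d : ℝ) - 1 := by linarith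
    positivity)) hp1
  have hγ : 2 ≤ radialExponent d * (p - 1) := by
    have h1 : 4 / ((d : ℝ) - 1) ≤ p - 1 := by linarith
    rw [div_le_iff₀ (by linarith)] at h1
    unfold radialExponent
    linarith
  have hlam' : radialExponent d * (radialExponent d - 1) = lamd := by
    rw [hlam, radialExponent]; ring
  have hμ : -1 / 4 < a + radialExponent d * (radialExponent d - 1) := by
    have h1 : 0 ≤ (((d : ℝ) - 2) * p - d) ^ 2 / (4 * p ^ 2) := by positivity
    rw [radialExponent]
    linarith
  have key := (S.wave hp).energy_distribution hp hμ hγ hR hRT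
  have hm : 0 ≤ radialExponent d := by unfold radialExponent; linarith
  have hc : 0 < sphereArea d := sphereArea_pos
  have cB : Continuous fun t => radialExponent d / 2 * ((S.wave hp).w R t ^ 2 / R) :=
    (((slice_t (S.wave hp).c hR).pow 2).div_const R).const_mul _
  have hB : ∀ t, 0 ≤ radialExponent d / 2 * ((S.wave hp).w R t ^ 2 / R) := fun t => by positivity
  -- the boundary contributions at `r = R` have a favourable sign on both sides
  have hB₁ : 0 ≤ ∫ t in R..T, radialExponent d / 2 * ((S.wave hp).w R t ^ 2 / R) :=
    intervalIntegral.integral_nonneg hRT.le fun t _ => hB t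
  have hB₂ : 0 ≤ ∫ t in (-R)..R, radialExponent d / 2 * ((S.wave hp).w R t ^ 2 / R) :=
    intervalIntegral.integral_nonneg (by linarith) fun t _ => hB t
  simp only [S.integral_ball hp hR, S.integral_outside hp hR, S.integral_cube hp hR,
    S.integral_square hp hR, intervalIntegral.integral_const_mul (sphereArea d)]
  rw [intervalIntegral.integral_sub ((S.wave hp).intervalIntegrable_inner hp hμ R hRT.le)
      (cB.intervalIntegrable _ _),
    intervalIntegral.integral_add ((S.wave hp).intervalIntegrable_outer hp hμ hR (by linarith))
      (cB.intervalIntegrable _ _)]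
  have hX : 0 ≤ ∫ t in (-R)..T, ∫ r in Ioi R, (S.wave hp).w r t ^ 2 / r ^ 2 / r :=
    intervalIntegral.integral_nonneg (by linarith) fun t _ =>
      setIntegral_nonneg measurableSet_Ioi fun r hr => by
        have : 0 < r := hR.trans hr
        positivity
  have hY : ∀ t, 0 ≤ ∫ r in Ioi R, (S.wave hp).w r t ^ 2 / r ^ 2 := fun t =>
    setIntegral_nonneg measurableSet_Ioi fun r _ => by positivity
  have hY₁ := hY (-R)
  have hY₂ := hY T
  have hZ : 0 ≤ (∫ t in (-R)..T, ∫ r in Ioi R, (S.wave hp).w r t ^ 2 / r ^ 2 / r)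
      + 1 / 2 * ((∫ r in Ioi R, (S.wave hp).w r (-R) ^ 2 / r ^ 2)
        + ∫ r in Ioi R, (S.wave hp).w r T ^ 2 / r ^ 2) := by linarith
  have hZ' := mul_le_mul_of_nonneg_right
    (mul_le_mul_of_nonneg_left (show
      -(a + radialExponent d * (radialExponent d - 1)) ≤ |a| - lamd by linarith [neg_abs_le a]) hR.le) hZ
  refine (mul_le_mul_of_nonneg_left (show _ ≤ (_ : ℝ) from ?_) hc.le).trans_eq
    (b := sphereArea d * ((∫ t in (-R)..R, ∫ r in Ioi R, (S.wave hp).e r t)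
      + (∫ t in (-R)..R, radialExponent d / 2 * ((S.wave hp).w R t ^ 2 / R))
      + R * (|a| - lamd) * ((∫ t in (-R)..T, ∫ r in Ioi R, (S.wave hp).w r t ^ 2 / r ^ 2 / r)
      + 1 / 2 * ((∫ r in Ioi R, (S.wave hp).w r (-R) ^ 2 / r ^ 2)
        + ∫ r in Ioi R, (S.wave hp).w r T ^ 2 / r ^ 2)))) (by ring)
  linarith
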